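/- arXiv:math/0612668 — 2 statements merged into one kernel-verified Lean document; each statement's English description precedes it below -/
import Mathlib

section
/- In the ring ℤ[[z,u,T]] of formal power series in three commuting variables the following identity holds: Σ_λ T^{|λ|} · ∏_{boxes of d(λ)} u^{2l+1} · (1 − z^{a+1}u^{l})^{−1} · (1 − z^{a}u^{l+1})^{−1} = ∏_{r ≥ 1, s ≥ 0} (1 − z^{s}u^{r}T)^{−1}, where the sum is over all partitions λ (including the empty partition, contributing 1), the product on the left is over the boxes of the Ferrers diagram of λ with a and l the arm and leg length of the box, and both the infinite sum and the infinite product converge in the formal power series topology. (Substituting u = w^{−1}, this is the genus-0 identity Σ_λ T^{|λ|} ∏ ((z^{a+1}−w^{l})(z^{a}−w^{l+1}))^{−1} = ∏_{r>0, s≥0} (1 − z^{s}w^{−r}T)^{−1}.) -/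
namespace Statement17

/-- The product (formal power series) topology on `ℤ[[z,u,T]] = MvPowerSeries (Fin 3) ℤ`:
a sequence converges iff each coefficient eventually stabilizes (`ℤ` being discrete). -/
noncomputable instance : TopologicalSpace (MvPowerSeries (Fin 3) ℤ) :=
  inferInstanceAs (TopologicalSpace ((Fin 3 →₀ ℕ) → ℤ))

/-- `colLen p j`: the number of parts of `p` that are `> j` (length of column `j`). -/
def colLen {k : ℕ} (p : Nat.Partition k) (j : ℕ) : ℕ :=
  Multiset.card (p.parts.filter (fun a => j < a))

/-- `rowLen p i`: the `(i+1)`-st largest part of `p` (length of row `i`). -/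
def rowLen {k : ℕ} (p : Nat.Partition k) (i : ℕ) : ℕ :=
  ((Finset.range k).filter (fun j => i < colLen p j)).card

/-- The boxes `(i,j)` (row, column, `0`-indexed) of the Ferrers diagram of `p`. -/
def boxes {k : ℕ} (p : Nat.Partition k) : Finset (ℕ × ℕ) :=
  (Finset.range k ×ˢ Finset.range k).filter (fun b => b.2 < rowLen p b.1)

/-- Arm length of a box. -/
def armLength {k : ℕ} (p : Nat.Partition k) (b : ℕ × ℕ) : ℕ :=
  rowLen p b.1 - (b.2 + 1)

/-- Leg length of a box. -/
def legLength {k : ℕ} (p : Nat.Partition k) (b : ℕ × ℕ) : ℕ :=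
  colLen p b.2 - (b.1 + 1)

/-- The summand `T^{|λ|} ∏_{boxes} u^{2l+1}·(1−z^{a+1}u^{l})⁻¹·(1−z^{a}u^{l+1})⁻¹`
attached to a partition `λ`, in `ℤ[[z,u,T]]` with `z = X 0`, `u = X 1`, `T = X 2`;
the inverses are genuine inverses of the units `1 − z^{a+1}u^l` and `1 − z^a u^{l+1}`
(taken via `Ring.inverse`). -/
noncomputable def lhsTerm (p : Σ m : ℕ, Nat.Partition m) : MvPowerSeries (Fin 3) ℤ :=
  (MvPowerSeries.X 2 : MvPowerSeries (Fin 3) ℤ) ^ p.1 *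
    ∏ b ∈ boxes p.2,
      ((MvPowerSeries.X 1 : MvPowerSeries (Fin 3) ℤ) ^ (2 * legLength p.2 b + 1) *
        Ring.inverse (1 - (MvPowerSeries.X 0 : MvPowerSeries (Fin 3) ℤ) ^ (armLength p.2 b + 1)
            * MvPowerSeries.X 1 ^ legLength p.2 b) *
        Ring.inverse (1 - (MvPowerSeries.X 0 : MvPowerSeries (Fin 3) ℤ) ^ armLength p.2 b
            * MvPowerSeries.X 1 ^ (legLength p.2 b + 1)))

/-- The factor `(1 − z^{s}u^{r}T)⁻¹` indexed by `rs = (r−1, s)` with `r ≥ 1`, `s ≥ 0`. -/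
noncomputable def rhsFactor (rs : ℕ × ℕ) : MvPowerSeries (Fin 3) ℤ :=
  Ring.inverse (1 - (MvPowerSeries.X 0 : MvPowerSeries (Fin 3) ℤ) ^ rs.2
      * MvPowerSeries.X 1 ^ (rs.1 + 1) * MvPowerSeries.X 2)

section
open Finset Matrix

lemma det_expand {R : Type*} [CommRing R] {N : ℕ} (y g : Fin N → R) (t : R) :
    (Matrix.of fun i j : Fin N => y i ^ (j : ℕ) + g i * (t * y i) ^ (j : ℕ)).det =
      ∑ I : Finset (Fin N), (∏ i ∈ I, g i) *
        (vandermonde (fun i => if i ∈ I then t * y i else y i)).det := by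
  have h := (Matrix.detRowAlternating (R := R) (n := Fin N)).toMultilinearMap.map_add_univ
    (fun i j => g i * (t * y i) ^ (j : ℕ)) (fun i j => y i ^ (j : ℕ))
  have e1 : (Matrix.of fun i j : Fin N => y i ^ (j : ℕ) + g i * (t * y i) ^ (j : ℕ)) =
    ((fun (i j : Fin N) => g i * (t * y i) ^ (j : ℕ)) + (fun (i j : Fin N) => y i ^ (j : ℕ))) := by
    ext i j; simp [add_comm]
  rw [e1]
  refine h.trans ?_
  refine Finset.sum_congr rfl fun I _ => ?_
  have h2 := (Matrix.detRowAlternating (R := R) (n := Fin N)).toMultilinearMap.map_smul_univ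
    (fun i => if i ∈ I then g i else 1)
    (vandermonde (fun i => if i ∈ I then t * y i else y i))
  have e2 : I.piecewise (fun (i j : Fin N) => g i * (t * y i) ^ (j : ℕ)) (fun (i j : Fin N) => y i ^ (j : ℕ)) =
     fun i => (if i ∈ I then g i else 1) • (vandermonde (fun i => if i ∈ I then t * y i else y i)) i := by
    ext i j
    by_cases hi : i ∈ I <;> simp [hi, Finset.piecewise, vandermonde_apply]
  rw [e2]
  refine h2.trans ?_
  rw [smul_eq_mul]
  congr 1
  simp [Finset.prod_ite_mem]

lemma sumB {K : Type*} [Field K] {N : ℕ} (x : Fin N → K) (t : K) (k : ℕ) :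
    ∑ I : Finset (Fin N) with I.card = k, (-1) ^ k *
        (vandermonde (fun i => if i ∈ I then t * x i else x i)).det =
      (∏ j ∈ range N, (1 - Polynomial.C (t ^ j) * Polynomial.X)).coeff k * (vandermonde x).det := by
  open Polynomial in
  have h := det_expand (fun i => (C (x i) : K[X])) (fun _ => - X) (C t)
  have e1 : (Matrix.of fun i j : Fin N => (C (x i) : K[X]) ^ (j : ℕ) + (-X) * (C t * C (x i)) ^ (j : ℕ))
      = vandermonde (fun i => (C (x i) : K[X])) *
        Matrix.diagonal (fun j : Fin N => 1 - C (t ^ (j:ℕ)) * X) := by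
    ext1 i j
    simp only [Matrix.of_apply, Matrix.mul_diagonal, vandermonde_apply, C_pow]
    ring
  rw [e1, Matrix.det_mul, Matrix.det_diagonal, Fin.prod_univ_eq_prod_range (fun j => 1 - (C (t ^ j) : K[X]) * X)] at h
  have e2 : ∀ v : Fin N → K, (vandermonde (fun i => (C (v i) : K[X]))).det = C (vandermonde v).det := by
    intro v
    simp [det_vandermonde, map_prod]
  have e3 : ∀ I : Finset (Fin N), (vandermonde (fun i => if i ∈ I then (C t : K[X]) * C (x i) else C (x i))).det
     = C (vandermonde (fun i => if i ∈ I then t * x i else x i)).det := by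
    intro I
    rw [← e2]
    congr 2; ext1 i; split_ifs <;> simp
  simp only [e2, e3, Finset.prod_const] at h
  have h3 := congrArg (fun p => Polynomial.coeff p k) h
  simp only [Polynomial.coeff_C_mul, Polynomial.finsetSum_coeff, Polynomial.coeff_mul_C] at h3
  rw [mul_comm, h3, Finset.sum_filter]
  refine Finset.sum_congr rfl fun I _ => ?_
  rw [neg_pow (Polynomial.X : Polynomial K), show ((-1 : Polynomial K)) ^ I.card = Polynomial.C ((-1) ^ I.card) by simp, Polynomial.coeff_C_mul, Polynomial.coeff_X_pow]
  by_cases hk : I.card = k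
  · simp [hk]
  · simp [hk, Ne.symm hk]

lemma sumA {K : Type*} [Field K] {n : ℕ} (q t : K) (hq : q ≠ 0) (ht : t ≠ 0) (l : Fin (n+1) → ℕ)
    (y : Fin (n+1) → K) (hy : ∀ i, y i = (q ^ l i)⁻¹ * t ^ (i : ℕ)) :
    ∑ I : Finset (Fin (n+1)), (∏ i ∈ I, (-(t ^ n)⁻¹ * (1 - q ^ l i * t ^ (n - i : ℕ)))) *
        (vandermonde (fun i => if i ∈ I then t * y i else y i)).det =
      q ^ (∑ i, l i) * (vandermonde y).det := by
  have hy0 : ∀ i, y i ≠ 0 := fun i => by rw [hy]; positivity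
  have hb : ∀ i : Fin (n+1), q ^ l i * t ^ (n - i : ℕ) = t ^ n * (y i)⁻¹ := by
    intro i
    have : t ^ n = t ^ (n - i : ℕ) * t ^ (i : ℕ) := by
      rw [← pow_add, Nat.sub_add_cancel (by omega)]
    rw [hy, this]; field_simp
  rw [← det_expand]
  let U : Matrix (Fin (n+1)) (Fin (n+1)) K := Matrix.of fun k j =>
    (if k = j then t ^ (j : ℕ) else 0) +
      (if (k : ℕ) = j + 1 then 1 - t ^ (j : ℕ) * (t ^ n)⁻¹ else 0)
  have e1 : (Matrix.of fun i j : Fin (n+1) => y i ^ (j : ℕ) +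
      (-(t ^ n)⁻¹ * (1 - q ^ l i * t ^ (n - i : ℕ))) * (t * y i) ^ (j : ℕ)) =
      Matrix.diagonal (fun i => (y i)⁻¹) * (vandermonde y * U) := by
    ext1 i j
    rw [Matrix.diagonal_mul, Matrix.mul_apply]
    simp only [Matrix.of_apply, vandermonde_apply, U, mul_add, Finset.sum_add_distrib, hb]
    have s1 : ∑ k : Fin (n+1), y i ^ (k:ℕ) * (if k = j then t ^ (j : ℕ) else 0) = y i ^ (j : ℕ) * t ^ (j : ℕ) := by
      simp
    have s2 : ∑ k : Fin (n+1), y i ^ (k:ℕ) * (if (k : ℕ) = j + 1 then 1 - t ^ (j : ℕ) * (t ^ n)⁻¹ else 0)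
        = y i ^ (j + 1 : ℕ) * (1 - t ^ (j : ℕ) * (t ^ n)⁻¹) := by
      by_cases hj : (j : ℕ) = n
      · rw [hj, mul_inv_cancel₀ (by positivity)]; simp
      · rw [Finset.sum_eq_single (⟨j + 1, by omega⟩ : Fin (n+1))]
        · simp
        · intro b _ hb
          rw [if_neg, mul_zero]
          intro h; apply hb; ext; exact h
        · simp
    rw [s1, s2]
    have := hy0 i
    field_simp
    ring
  rw [e1, Matrix.det_mul, Matrix.det_mul, Matrix.det_diagonal]
  have hU : U.det = ∏ j : Fin (n+1), t ^ (j:ℕ) := by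
    rw [Matrix.det_of_isLowerTriangular]
    · refine Finset.prod_congr rfl fun j _ => ?_
      simp [U]
    · intro i j hij
      have : (i : ℕ) < j := hij
      simp only [U, Matrix.of_apply]
      rw [if_neg (by intro h; subst h; omega), if_neg (by omega), add_zero]
  rw [hU, mul_comm (vandermonde y).det, ← mul_assoc, ← Finset.prod_mul_distrib]
  congr 1
  rw [← Finset.prod_pow_eq_pow_sum]
  refine Finset.prod_congr rfl fun i _ => ?_
  rw [hy]; field_simp

end

section
open Finset Matrix

/-- pair weight -/
def pairW {K : Type*} [Field K] (q t : K) (d r : ℕ) : K :=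
  ∏ a ∈ range r, (t ^ 2)⁻¹ * ((1 - q ^ (a+1) * t ^ d) * (1 - q ^ a * t ^ (d+1))) /
    ((1 - q ^ (a+1) * t ^ (d-1)) * (1 - q ^ a * t ^ d))

/-- row weight -/
def singW {K : Type*} [Field K] (q t : K) (e r : ℕ) : K :=
  ∏ a ∈ range r, t ^ (2 * e) / (1 - q ^ (a+1) * t ^ e)

/-- the weight of a partition with at most `n+1` rows -/
def mW {K : Type*} [Field K] (q t : K) (n : ℕ) (l : Fin (n+1) → ℕ) : K :=
  ∏ i : Fin (n+1), (singW q t (n - i) (l i) * ∏ j ∈ Ioi i, pairW q t (j - i) (l i - l j))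

lemma pair_step {K : Type*} [Field K] (q t : K) (hq : q ≠ 0) (ht : t ≠ 0)
    (hG : ∀ a b : ℕ, a + b ≠ 0 → 1 - q ^ a * t ^ b ≠ 0) (d r : ℕ) (hd : 1 ≤ d)
    (xi xj yi yj : K) (hy : yj = yi * (q ^ (r+1) * t ^ d)) (hx : xi = xj * (q ^ r * t ^ d)) :
    pairW q t d (r+1) * ((yj - t * yi) * (xj - xi)) * t = 
      pairW q t d r * ((xj - t * xi) * (yj - yi)) := by
  obtain ⟨d, rfl⟩ : ∃ e, d = e + 1 := ⟨d - 1, by omega⟩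
  have h1 := hG (r+1) d (by omega)
  have h2 := hG r (d+1) (by omega)
  have hD : t ^ 2 * ((1 - q ^ (r+1) * t ^ d) * (1 - q ^ r * t ^ (d+1))) ≠ 0 :=
    mul_ne_zero (pow_ne_zero _ ht) (mul_ne_zero h1 h2)
  have hW : pairW q t (d+1) (r+1) * (t ^ 2 * ((1 - q ^ (r+1) * t ^ d) * (1 - q ^ r * t ^ (d+1)))) =
      pairW q t (d+1) r * ((1 - q ^ (r+1) * t ^ (d+1)) * (1 - q ^ r * t ^ (d+1+1))) := by
    unfold pairW
    rw [prod_range_succ, Nat.add_sub_cancel, mul_assoc]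
    congr 1
    rw [← mul_div_assoc', inv_mul_eq_div, div_mul_eq_mul_div, div_eq_iff (pow_ne_zero _ ht),
      mul_left_comm, div_mul_cancel₀ _ (mul_ne_zero h1 h2), mul_comm]
  apply mul_right_cancel₀ hD
  rw [hx, hy]
  linear_combination ((yi * (q ^ (r + 1) * t ^ (d + 1)) - t * yi) * (xj - xj * (q ^ r * t ^ (d + 1))) * t) * hW

lemma pair_step' {K : Type*} [Field K] (q t : K) (hq : q ≠ 0) (ht : t ≠ 0)
    (hG : ∀ a b : ℕ, a + b ≠ 0 → 1 - q ^ a * t ^ b ≠ 0) (d r : ℕ) (hd : 1 ≤ d)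
    (xi xj yi yj : K) (hy : yj = yi * (q ^ r * t ^ d)) (hx : xi = xj * (q ^ (r+1) * t ^ d)) :
    pairW q t d r * ((t * yj - yi) * (xj - xi)) = 
      pairW q t d (r+1) * ((t * xj - xi) * (yj - yi)) * t := by
  obtain ⟨d, rfl⟩ : ∃ e, d = e + 1 := ⟨d - 1, by omega⟩
  have h1 := hG (r+1) d (by omega)
  have h2 := hG r (d+1) (by omega)
  have hD : t ^ 2 * ((1 - q ^ (r+1) * t ^ d) * (1 - q ^ r * t ^ (d+1))) ≠ 0 :=
    mul_ne_zero (pow_ne_zero _ ht) (mul_ne_zero h1 h2)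
  have hW : pairW q t (d+1) (r+1) * (t ^ 2 * ((1 - q ^ (r+1) * t ^ d) * (1 - q ^ r * t ^ (d+1)))) =
      pairW q t (d+1) r * ((1 - q ^ (r+1) * t ^ (d+1)) * (1 - q ^ r * t ^ (d+1+1))) := by
    unfold pairW
    rw [prod_range_succ, Nat.add_sub_cancel, mul_assoc]
    congr 1
    rw [← mul_div_assoc', inv_mul_eq_div, div_mul_eq_mul_div, div_eq_iff (pow_ne_zero _ ht),
      mul_left_comm, div_mul_cancel₀ _ (mul_ne_zero h1 h2), mul_comm]
  apply mul_right_cancel₀ hD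
  rw [hx, hy]
  linear_combination -((t * xj - xj * (q ^ (r + 1) * t ^ (d + 1))) * (yi * (q ^ r * t ^ (d + 1)) - yi) * t) * hW

lemma pair_rel {K : Type*} [Field K] (q t : K) (hq : q ≠ 0) (ht : t ≠ 0)
    (hG : ∀ a b : ℕ, a + b ≠ 0 → 1 - q ^ a * t ^ b ≠ 0) (d li lj mi mj : ℕ) (hd : 1 ≤ d)
    (P Q : Prop) [Decidable P] [Decidable Q]
    (hi : li = mi + if P then 1 else 0) (hj : lj = mj + if Q then 1 else 0)
    (hl : lj ≤ li) (hm : mj ≤ mi)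
    (xi xj yi yj : K) (hy : yj = yi * (q ^ (li - lj) * t ^ d)) (hx : xi = xj * (q ^ (mi - mj) * t ^ d)) :
    pairW q t d (li - lj) * (((if Q then t * yj else yj) - (if P then t * yi else yi)) * (xj - xi)) *
        (if P then t else 1) =
      pairW q t d (mi - mj) * (((if Q then t * xj else xj) - (if P then t * xi else xi)) * (yj - yi)) *
        (if Q then t else 1) := by
  by_cases hP : P <;> by_cases hQ : Q <;> simp only [hP, hQ, if_true, if_false] at *
  · have : li - lj = mi - mj := by omega
    rw [this]; ring
  · obtain e : li - lj = mi - mj + 1 := by omega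
    rw [e] at hy ⊢
    rw [mul_one]
    exact pair_step q t hq ht hG d _ hd xi xj yi yj hy hx
  · obtain e : mi - mj = li - lj + 1 := by omega
    rw [e] at hx ⊢
    rw [mul_one]
    exact pair_step' q t hq ht hG d _ hd xi xj yi yj hy hx
  · have : li - lj = mi - mj := by omega
    rw [this]; ring

lemma prod_pairs_left {K : Type*} [Field K] {n : ℕ} (e : Fin (n+1) → K) :
    ∏ i, ∏ _j ∈ Ioi i, e i = ∏ i, e i ^ (n - i : ℕ) := by
  simp

lemma prod_pairs_right {K : Type*} [Field K] {n : ℕ} (e : Fin (n+1) → K) :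
    ∏ i, ∏ j ∈ Ioi i, e j = ∏ i, e i ^ (i : ℕ) := by
  rw [Finset.prod_comm' (t' := univ) (s' := fun j => Iio j)]
  · simp
  · simp

lemma vand_ne_zero {K : Type*} [Field K] (q t : K) (hG : ∀ a b : ℕ, a + b ≠ 0 → 1 - q ^ a * t ^ b ≠ 0)
    {n : ℕ} (l : Fin (n+1) → ℕ) (y : Fin (n+1) → K) (hy0 : ∀ i, y i ≠ 0)
    (hy : ∀ i j, i < j → y j = y i * (q ^ (l i - l j) * t ^ (j - i : ℕ))) : (vandermonde y).det ≠ 0 := by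
  rw [det_vandermonde]
  refine Finset.prod_ne_zero_iff.2 fun i _ => Finset.prod_ne_zero_iff.2 fun j hj => ?_
  rw [mem_Ioi] at hj
  rw [hy i j hj]
  have := mul_ne_zero (hy0 i) (hG (l i - l j) (j - i : ℕ) (by have : (i:ℕ) < j := hj; omega))
  intro h; apply this; linear_combination -h

lemma mW_rel {K : Type*} [Field K] (q t : K) (hq : q ≠ 0) (ht : t ≠ 0)
    (hG : ∀ a b : ℕ, a + b ≠ 0 → 1 - q ^ a * t ^ b ≠ 0) (n : ℕ) (l m : Fin (n+1) → ℕ)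
    (I : Finset (Fin (n+1))) (hl : Antitone l) (hm : Antitone m)
    (hlm : ∀ i, l i = m i + if i ∈ I then 1 else 0) (x y : Fin (n+1) → K)
    (hy : ∀ i j, i < j → y j = y i * (q ^ (l i - l j) * t ^ (j - i : ℕ)))
    (hx : ∀ i j, i < j → x i = x j * (q ^ (m i - m j) * t ^ (j - i : ℕ))) :
    mW q t n l * (∏ i ∈ I, (-(t ^ n)⁻¹ * (1 - q ^ l i * t ^ (n - i : ℕ)))) *
        (vandermonde (fun i => if i ∈ I then t * y i else y i)).det * (vandermonde x).det = 
    mW q t n m * (-1) ^ I.card * (vandermonde (fun i => if i ∈ I then t * x i else x i)).det * 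
       (vandermonde y).det := by
  set e : Fin (n+1) → K := fun i => if i ∈ I then t else 1 with he
  have he0 : ∀ i, e i ≠ 0 := fun i => by simp only [he]; split_ifs <;> simp [ht]
  have hpair : (∏ i : Fin (n+1), ∏ j ∈ Ioi i, pairW q t (j - i) (l i - l j)) *
      ((vandermonde (fun i => if i ∈ I then t * y i else y i)).det * (vandermonde x).det) *
        ∏ i, ∏ j ∈ Ioi i, e i = 
      (∏ i : Fin (n+1), ∏ j ∈ Ioi i, pairW q t (j - i) (m i - m j)) *
      ((vandermonde (fun i => if i ∈ I then t * x i else x i)).det * (vandermonde y).det) *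
        ∏ i, ∏ j ∈ Ioi i, e j := by
    simp only [det_vandermonde, ← Finset.prod_mul_distrib]
    refine Finset.prod_congr rfl fun i _ => Finset.prod_congr rfl fun j hj => ?_
    rw [mem_Ioi] at hj
    have hj' : (i : ℕ) < j := hj
    exact pair_rel q t hq ht hG _ _ _ _ _ (by omega) (i ∈ I) (j ∈ I) (hlm i) (hlm j) (hl hj.le) (hm hj.le)
      _ _ _ _ (hy i j hj) (hx i j hj)
  rw [prod_pairs_left, prod_pairs_right] at hpair
  have hsing : (∏ i : Fin (n+1), singW q t (n - i) (l i)) * (∏ i ∈ I, (-(t ^ n)⁻¹ * (1 - q ^ l i * t ^ (n - i : ℕ))))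
      * ∏ i, e i ^ (i : ℕ) 
      = (∏ i : Fin (n+1), singW q t (n - i) (m i)) * (-1) ^ I.card * ∏ i, e i ^ (n - i : ℕ) := by
    have a1 : (∏ i ∈ I, (-(t ^ n)⁻¹ * (1 - q ^ l i * t ^ (n - i : ℕ)))) =
       ∏ i, if i ∈ I then (-(t ^ n)⁻¹ * (1 - q ^ l i * t ^ (n - i : ℕ))) else 1 := by
      simp [Finset.prod_ite_mem]
    have a2 : (-1 : K) ^ I.card = ∏ i, if i ∈ I then (-1 : K) else 1 := by
      simp [Finset.prod_ite_mem]
    rw [a1, a2]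
    simp only [← Finset.prod_mul_distrib]
    refine Finset.prod_congr rfl fun i _ => ?_
    rw [hlm i]
    by_cases hi : i ∈ I
    · simp only [hi, if_true, he]
      have h1 := hG (m i + 1) (n - i) (by omega)
      have hS : singW q t (n - i) (m i + 1) = singW q t (n - i) (m i) *
          (t ^ (2 * (n - (i : ℕ))) / (1 - q ^ (m i + 1) * t ^ (n - (i : ℕ)))) := by
        unfold singW
        rw [prod_range_succ]
      have : t ^ n = t ^ (n - i : ℕ) * t ^ (i : ℕ) := by
        rw [← pow_add, Nat.sub_add_cancel (by omega)]
      rw [hS, this, two_mul (n - (i : ℕ)), pow_add t (n - (i : ℕ))]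
      generalize singW q t (n - i) (m i) = W
      generalize 1 - q ^ (m i + 1) * t ^ (n - (i : ℕ)) = Z at *
      field_simp
    · simp [hi, he]
  unfold mW
  simp only [Finset.prod_mul_distrib]
  have n1 : ∏ i, e i ^ (i : ℕ) ≠ 0 := Finset.prod_ne_zero_iff.2 fun i _ => pow_ne_zero _ (he0 i)
  have n2 : ∏ i, e i ^ (n - i : ℕ) ≠ 0 := Finset.prod_ne_zero_iff.2 fun i _ => pow_ne_zero _ (he0 i)
  apply mul_right_cancel₀ (mul_ne_zero n1 n2)
  have h3 := congrArg₂ (· * ·) hpair hsing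
  simp only [Finset.prod_mul_distrib] at h3 ⊢
  linear_combination h3

end

section
open Finset Matrix

/-- weakly decreasing sequences of length `n+1` with sum `s` -/
def PP (n s : ℕ) : Finset (Fin (n+1) → ℕ) :=
  (Finset.piAntidiag univ s).filter (fun f => ∀ i : Fin n, f i.succ ≤ f i.castSucc)

lemma mem_PP {n s : ℕ} {f : Fin (n+1) → ℕ} : f ∈ PP n s ↔ ∑ i, f i = s ∧ Antitone f := by
  simp [PP, Fin.antitone_iff_succ_le]

lemma collA {K : Type*} [Field K] (q t : K) (ht : t ≠ 0) (n : ℕ) (l : Fin (n+1) → ℕ)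
    (I : Finset (Fin (n+1))) (hl : Antitone l)
    (h1 : ∀ i ∈ I, 1 - q ^ l i * t ^ (n - i : ℕ) ≠ 0)
    (h2 : Function.Injective (fun i : Fin (n+1) => if i ∈ I then t * ((q ^ l i)⁻¹ * t ^ (i:ℕ))
      else ((q ^ l i)⁻¹ * t ^ (i : ℕ)))) :
    (∀ i ∈ I, 1 ≤ l i) ∧ Antitone (fun i => l i - if i ∈ I then 1 else 0) := by
  have key : ∀ i : Fin n, l i.succ = l i.castSucc → i.castSucc ∈ I → i.succ ∈ I := by
    intro i hi hI
    by_contra hn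
    have := @h2 i.castSucc i.succ (by
      simp only [hI, hn, if_true, if_false, hi, Fin.val_succ, Fin.val_castSucc]; ring)
    exact absurd (congrArg Fin.val this) (by simp)
  have hpos : ∀ i ∈ I, 1 ≤ l i := by
    intro i hi
    by_contra h0
    have h0 : l i = 0 := by omega
    have hz : ∀ j, i ≤ j → l j = 0 := fun j hj => by have := hl hj; omega
    have : ∀ k : ℕ, ∀ h : i + k < n + 1, (⟨i + k, h⟩ : Fin (n+1)) ∈ I := by
      intro k
      induction k with
      | zero => intro h; exact hi
      | succ k ih =>
        intro h
        have := key ⟨i + k, by omega⟩ (by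
          rw [hz _ (by rw [Fin.le_def]; simp; omega), hz _ (by rw [Fin.le_def]; simp)]) (ih (by omega))
        exact this
    have hlast := this (n - i) (by omega)
    have h3 := h1 _ hlast
    apply h3
    rw [hz _ (by rw [Fin.le_def]; simp)]
    have : n - (i + (n - i) : ℕ) = 0 := by omega
    simp [this]
  refine ⟨hpos, Fin.antitone_iff_succ_le.2 fun i => ?_⟩
  have a1 : l i.succ ≤ l i.castSucc := hl (Fin.castSucc_lt_succ).le
  by_cases hI : i.castSucc ∈ I
  · by_cases e : l i.succ = l i.castSucc
    · have := key i e hI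
      simp [hI, this, e]
    · simp only [hI, if_true]; omega
  · simp only [hI, if_false]; omega

lemma collB {K : Type*} [Field K] (q t : K) (n : ℕ) (m : Fin (n+1) → ℕ)
    (I : Finset (Fin (n+1))) (hm : Antitone m)
    (h2 : Function.Injective (fun i : Fin (n+1) => if i ∈ I then t * (q ^ m i * t ^ (n - i:ℕ))
      else (q ^ m i * t ^ (n - i : ℕ)))) :
    Antitone (fun i => m i + if i ∈ I then 1 else 0) := by
  refine Fin.antitone_iff_succ_le.2 fun i => ?_
  have a1 : m i.succ ≤ m i.castSucc := hm (Fin.castSucc_lt_succ).le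
  by_cases hI : i.castSucc ∈ I
  · simp only [hI, if_true]; split_ifs <;> omega
  · by_cases e : m i.succ = m i.castSucc
    · have : i.succ ∉ I := by
        intro hs
        have e2 : n - (i : ℕ) = n - (i + 1) + 1 := by omega
        have := @h2 i.castSucc i.succ (by
          simp only [hI, hs, if_true, if_false, e, Fin.val_succ, Fin.val_castSucc]
          rw [e2]; ring)
        exact absurd (congrArg Fin.val this) (by simp)
      simp only [hI, this, if_false, e, le_refl]
    · simp only [hI, if_false]; split_ifs <;> omega

theorem recF {K : Type*} [Field K] (q t : K) (hq : q ≠ 0) (ht : t ≠ 0)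
    (hG : ∀ a b : ℕ, a + b ≠ 0 → 1 - q ^ a * t ^ b ≠ 0) (n s : ℕ) :
    q ^ s * ∑ l ∈ PP n s, mW q t n l =
      ∑ k ∈ range (s+1), (∏ j ∈ range (n+1), (1 - Polynomial.C (t ^ j) * Polynomial.X)).coeff k *
        ∑ m ∈ PP n (s - k), mW q t n m := by
  let y : (Fin (n+1) → ℕ) → Fin (n+1) → K := fun l i => (q ^ l i)⁻¹ * t ^ (i : ℕ)
  let x : (Fin (n+1) → ℕ) → Fin (n+1) → K := fun l i => q ^ l i * t ^ (n - i : ℕ)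
  have hy0 : ∀ l i, y l i ≠ 0 := fun l i => by positivity
  have hx0 : ∀ l i, x l i ≠ 0 := fun l i => by positivity
  have hy : ∀ l, Antitone l → ∀ i j, i < j → y l j = y l i * (q ^ (l i - l j) * t ^ (j - i : ℕ)) := by
    intro l hl i j hij
    have h1 := hl hij.le
    have h2 : (i : ℕ) < j := hij
    simp only [y]
    have e1 : q ^ l i = q ^ (l i - l j) * q ^ l j := by rw [← pow_add]; congr 1; omega
    have e2 : t ^ (j : ℕ) = t ^ (j - i : ℕ) * t ^ (i : ℕ) := by rw [← pow_add]; congr 1; omega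
    rw [e1, e2]; field_simp
  have hx : ∀ l, Antitone l → ∀ i j, i < j → x l i = x l j * (q ^ (l i - l j) * t ^ (j - i : ℕ)) := by
    intro l hl i j hij
    have h1 := hl hij.le
    have h2 : (i : ℕ) < j := hij
    simp only [x]
    have e1 : q ^ l i = q ^ (l i - l j) * q ^ l j := by rw [← pow_add]; congr 1; omega
    have e2 : t ^ (n - i : ℕ) = t ^ (j - i : ℕ) * t ^ (n - j : ℕ) := by rw [← pow_add]; congr 1; omega
    rw [e1, e2]; ring
  have hVy : ∀ l, Antitone l → (vandermonde (y l)).det ≠ 0 := fun l hl =>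
    vand_ne_zero q t hG l _ (hy0 l) (hy l hl)
  have hVx : ∀ l, Antitone l → (vandermonde (x l)).det ≠ 0 := by
    intro l hl
    rw [det_vandermonde]
    refine Finset.prod_ne_zero_iff.2 fun i _ => Finset.prod_ne_zero_iff.2 fun j hj => ?_
    rw [mem_Ioi] at hj
    rw [hx l hl i j hj]
    have := mul_ne_zero (hx0 l j) (hG (l i - l j) (j - i : ℕ) (by have : (i:ℕ) < j := hj; omega))
    intro h; apply this; linear_combination h
  let a : (Fin (n+1) → ℕ) → Finset (Fin (n+1)) → K := fun l I =>
    mW q t n l * (∏ i ∈ I, (-(t ^ n)⁻¹ * (1 - q ^ l i * t ^ (n - i : ℕ)))) *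
        (vandermonde (fun i => if i ∈ I then t * y l i else y l i)).det / (vandermonde (y l)).det
  let b : (Fin (n+1) → ℕ) → Finset (Fin (n+1)) → K := fun m I =>
    mW q t n m * (-1) ^ I.card * (vandermonde (fun i => if i ∈ I then t * x m i else x m i)).det /
      (vandermonde (x m)).det
  have hA : ∀ l ∈ PP n s, q ^ s * mW q t n l = ∑ I, a l I := by
    intro l hl
    obtain ⟨hs, hl⟩ := mem_PP.1 hl
    have := sumA q t hq ht l (y l) (fun i => rfl)
    simp only [a]
    rw [← Finset.sum_div, eq_div_iff (hVy l hl)]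
    simp only [mul_assoc (mW q t n l)]
    rw [← Finset.mul_sum, this, hs]; ring
  have hB : ∀ k s', ∀ m ∈ PP n s', (∏ j ∈ range (n+1), (1 - Polynomial.C (t ^ j) * Polynomial.X)).coeff k *
      mW q t n m = ∑ I with I.card = k, b m I := by
    intro k s' m hm
    obtain ⟨hs, hm⟩ := mem_PP.1 hm
    have := sumB (x m) t k
    simp only [b]
    rw [← Finset.sum_div, eq_div_iff (hVx m hm)]
    simp only [mul_assoc (mW q t n m)]
    rw [← Finset.mul_sum, mul_right_comm, ← this, mul_comm]
    congr 1
    refine Finset.sum_congr rfl fun I hI => ?_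
    rw [(mem_filter.1 hI).2]
  have hrel : ∀ l m I, Antitone l → Antitone m → (∀ i, l i = m i + if i ∈ I then 1 else 0) →
      a l I = b m I := by
    intro l m I hl hm h
    simp only [a, b]
    rw [div_eq_div_iff (hVy l hl) (hVx m hm)]
    exact mW_rel q t hq ht hG n l m I hl hm h _ _ (hy l hl) (hx m hm)
  have hmain : ∀ I : Finset (Fin (n+1)), ∑ l ∈ PP n s, a l I =
      ∑ m ∈ (if I.card ≤ s then PP n (s - I.card) else ∅), b m I := by
    intro I
    have hcard : ∑ i : Fin (n+1), (if i ∈ I then 1 else 0) = I.card := by simp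
    refine Finset.sum_bij_ne_zero (fun l _ _ => fun i => l i - if i ∈ I then 1 else 0) ?_ ?_ ?_ ?_
    · intro l hl h0
      obtain ⟨hs, hl⟩ := mem_PP.1 hl
      simp only [a, ne_eq, div_eq_zero_iff, mul_eq_zero, not_or] at h0
      have c := collA q t ht n l I hl (fun i hi h => h0.1.1.2 (Finset.prod_eq_zero hi (by rw [h, mul_zero])))
        (det_vandermonde_ne_zero_iff.1 h0.1.2)
      have hsum : ∑ i, (l i - if i ∈ I then 1 else 0) + I.card = s := by
        rw [← hcard, ← Finset.sum_add_distrib, ← hs]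
        refine Finset.sum_congr rfl fun i _ => ?_
        by_cases hi : i ∈ I
        · have := c.1 i hi; simp only [hi, if_true]; omega
        · simp [hi]
      rw [if_pos (by omega)]
      exact mem_PP.2 ⟨by omega, c.2⟩
    · intro l hl h0 l' hl' h0' heq
      obtain ⟨hs, hl⟩ := mem_PP.1 hl
      obtain ⟨hs', hl'⟩ := mem_PP.1 hl'
      simp only [a, ne_eq, div_eq_zero_iff, mul_eq_zero, not_or] at h0 h0'
      have c := collA q t ht n l I hl (fun i hi h => h0.1.1.2 (Finset.prod_eq_zero hi (by rw [h, mul_zero])))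
        (det_vandermonde_ne_zero_iff.1 h0.1.2)
      have c' := collA q t ht n l' I hl' (fun i hi h => h0'.1.1.2 (Finset.prod_eq_zero hi (by rw [h, mul_zero])))
        (det_vandermonde_ne_zero_iff.1 h0'.1.2)
      ext i
      have e := congrFun heq i
      by_cases hi : i ∈ I
      · have c1 := c.1 i hi
        have c2 := c'.1 i hi
        simp only [hi, if_true] at e
        omega
      · simpa [hi] using e
    · intro m hm h0
      have h0' := h0
      simp only [b, ne_eq, div_eq_zero_iff, mul_eq_zero, not_or] at h0'
      by_cases hc : I.card ≤ s
      swap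
      · simp [hc] at hm
      rw [if_pos hc] at hm
      obtain ⟨hs, hm⟩ := mem_PP.1 hm
      have c := collB q t n m I hm (det_vandermonde_ne_zero_iff.1 h0'.1.2)
      refine ⟨fun i => m i + if i ∈ I then 1 else 0, mem_PP.2 ⟨?_, c⟩, ?_, ?_⟩
      · rw [Finset.sum_add_distrib, hcard, hs]; omega
      · rw [hrel _ m I c hm (fun i => rfl)]; exact h0
      · ext i; simp
    · intro l hl h0
      obtain ⟨hs, hl⟩ := mem_PP.1 hl
      simp only [a, ne_eq, div_eq_zero_iff, mul_eq_zero, not_or] at h0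
      have c := collA q t ht n l I hl (fun i hi h => h0.1.1.2 (Finset.prod_eq_zero hi (by rw [h, mul_zero])))
        (det_vandermonde_ne_zero_iff.1 h0.1.2)
      refine hrel _ _ I hl c.2 fun i => ?_
      by_cases hi : i ∈ I
      · have := c.1 i hi; simp only [hi, if_true]; omega
      · simp [hi]
  rw [Finset.mul_sum, Finset.sum_congr rfl hA, Finset.sum_comm, Finset.sum_congr rfl fun I _ => hmain I]
  have hR : ∀ k ∈ range (s+1), (∏ j ∈ range (n+1), (1 - Polynomial.C (t ^ j) * Polynomial.X)).coeff k *
        ∑ m ∈ PP n (s - k), mW q t n m = ∑ I with I.card = k, ∑ m ∈ PP n (s - k), b m I := by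
    intro k _
    rw [Finset.mul_sum, Finset.sum_congr rfl (hB k (s-k)), Finset.sum_comm]
  rw [Finset.sum_congr rfl hR]
  simp only [Finset.sum_filter]
  rw [Finset.sum_comm]
  refine Finset.sum_congr rfl fun I _ => ?_
  rw [Finset.sum_ite_eq]
  by_cases hc : I.card ≤ s
  · rw [if_pos hc, if_pos (by simp; omega)]
  · rw [if_neg hc, if_neg (by simp; omega)]; simp

end

section
open Finset

lemma rowProd {K : Type*} [Field K] (H : ℕ → ℕ → K) (hH : ∀ a b, H a b ≠ 0)
    (lam col : ℕ → ℕ) (hg : ∀ i c, c < lam i ↔ i < col c) (hl : Antitone lam) (i N : ℕ) (hN : i + 1 ≤ N) :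
    ∏ c ∈ Ico (lam N) (lam i), H (lam i - (c + 1)) (col c - (i + 1)) =
      (∏ a ∈ range (lam i - lam N), H a (N - 1 - i)) *
      ∏ j ∈ Ioo i N, ((∏ a ∈ range (lam i - lam j), H a (j - i - 1)) /
        ∏ a ∈ range (lam i - lam j), H a (j - i)) := by
  have refl : ∀ (A B d : ℕ), A ≤ lam i → B ≤ A → ∏ c ∈ Ico B A, H (lam i - (c + 1)) d =
      ∏ a ∈ Ico (lam i - A) (lam i - B), H a d := by
    intro A B d hA hB
    rcases Nat.eq_zero_or_pos (lam i) with h0 | h0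
    · have : A = 0 := by omega
      have : B = 0 := by omega
      subst_vars; simp [h0]
    · have := Finset.prod_Ico_reflect (fun a => H a d) B (m := A) (n := lam i - 1) (by omega)
      rw [show lam i - 1 + 1 - A = lam i - A by omega, show lam i - 1 + 1 - B = lam i - B by omega] at this
      rw [← this]
      refine Finset.prod_congr rfl fun c _ => ?_
      congr 1; omega
  have hcol : ∀ M c, c ∈ Ico (lam (M+1)) (lam M) → col c = M + 1 := by
    intro M c hc
    rw [mem_Ico] at hc
    have h1 := (hg M c).1 hc.2
    have h2 := (hg (M+1) c).not.1 (by omega)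
    omega
  induction N, hN using Nat.le_induction with
  | base =>
    have e : ∏ c ∈ Ico (lam (i+1)) (lam i), H (lam i - (c + 1)) (col c - (i + 1)) =
        ∏ c ∈ Ico (lam (i+1)) (lam i), H (lam i - (c + 1)) 0 :=
      Finset.prod_congr rfl fun c hc => by rw [hcol i c hc, Nat.sub_self]
    rw [e, refl _ _ _ le_rfl (hl (Nat.le_succ i))]
    have : Ioo i (i+1) = ∅ := by ext x; simp
    rw [this]
    simp
  | succ N hN ih =>
    have h1 : lam N ≤ lam i := hl (by omega)
    have h2 : lam (N+1) ≤ lam N := hl (by omega)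
    rw [← Finset.prod_Ico_consecutive _ h2 h1, ih]
    have e : ∏ c ∈ Ico (lam (N+1)) (lam N), H (lam i - (c + 1)) (col c - (i + 1)) =
        ∏ c ∈ Ico (lam (N+1)) (lam N), H (lam i - (c + 1)) (N - i) :=
      Finset.prod_congr rfl fun c hc => by
        rw [hcol N c hc]; congr 1; omega
    rw [e, refl _ _ _ h1 h2]
    have e3 : Ioo i (N+1) = insert N (Ioo i N) := by ext x; simp; omega
    rw [e3, Finset.prod_insert (by simp)]
    have e4 : ∏ a ∈ range (lam i - lam (N+1)), H a (N - i) =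
      (∏ a ∈ range (lam i - lam N), H a (N - i)) * ∏ a ∈ Ico (lam i - lam N) (lam i - lam (N+1)), H a (N - i) :=
      (Finset.prod_range_mul_prod_Ico _ (by omega)).symm
    rw [show N + 1 - 1 - i = N - i by omega, e4, show N - i - 1 = N - 1 - i by omega]
    have : ∏ a ∈ range (lam i - lam N), H a (N - i) ≠ 0 := Finset.prod_ne_zero_iff.2 fun a _ => hH _ _
    field_simp

lemma colLen_anti {k : ℕ} (p : Nat.Partition k) : Antitone (colLen p) := by
  intro a b h
  exact Multiset.card_le_card (Multiset.monotone_filter_right _ (fun x hx => by omega))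

lemma colLen_le {k : ℕ} (p : Nat.Partition k) (j : ℕ) : colLen p j ≤ k := by
  refine (Multiset.card_le_card (Multiset.filter_le _ _)).trans ?_
  calc Multiset.card p.parts = (p.parts.map (fun _ => 1)).sum := by simp
    _ ≤ (p.parts.map id).sum := Multiset.sum_map_le_sum_map _ _ (fun x hx => p.parts_pos hx)
    _ = k := by simpa using p.parts_sum

lemma colLen_zero {k : ℕ} (p : Nat.Partition k) (j : ℕ) (h : k ≤ j) : colLen p j = 0 := by
  unfold colLen
  rw [Multiset.card_eq_zero, Multiset.filter_eq_nil]
  intro a ha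
  have := Multiset.le_sum_of_mem ha
  rw [p.parts_sum] at this
  omega

lemma galois {k : ℕ} (p : Nat.Partition k) (i c : ℕ) : c < rowLen p i ↔ i < colLen p c := by
  constructor
  · intro h
    by_contra hc
    have : (range k).filter (fun j => i < colLen p j) ⊆ range c := by
      intro x hx
      rw [mem_filter] at hx
      rw [mem_range]
      by_contra hxc
      have := colLen_anti p (not_lt.1 hxc)
      omega
    have := Finset.card_le_card this
    rw [card_range] at this
    unfold rowLen at h
    omega
  · intro h
    have : range (c+1) ⊆ (range k).filter (fun j => i < colLen p j) := by
      intro x hx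
      rw [mem_range] at hx
      have h2 := colLen_anti p (show x ≤ c by omega)
      rw [mem_filter, mem_range]
      refine ⟨?_, by omega⟩
      by_contra hk
      have := colLen_zero p x (by omega)
      omega
    have := Finset.card_le_card this
    rw [card_range] at this
    unfold rowLen
    omega

lemma rowLen_anti {k : ℕ} (p : Nat.Partition k) : Antitone (rowLen p) := by
  intro a b h
  by_contra hc
  rw [not_le, galois] at hc
  have := (galois p b (rowLen p a)).2
  have h3 := (galois p a (rowLen p a)).2 (by omega)
  omega

lemma rowLen_zero {k : ℕ} (p : Nat.Partition k) (i : ℕ) (h : k ≤ i) : rowLen p i = 0 := by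
  by_contra hc
  have := (galois p i 0).1 (by omega)
  have := colLen_le p 0
  omega

lemma rowLen_le {k : ℕ} (p : Nat.Partition k) (i : ℕ) : rowLen p i ≤ k := by
  unfold rowLen
  exact (Finset.card_filter_le _ _).trans (by simp)

lemma prod_boxes {M : Type*} [CommMonoid M] {k : ℕ} (p : Nat.Partition k) (N : ℕ) (hN : k ≤ N)
    (f : ℕ × ℕ → M) :
    ∏ b ∈ boxes p, f b = ∏ i ∈ range N, ∏ c ∈ range (rowLen p i), f (i, c) := by
  unfold boxes
  rw [Finset.prod_filter, Finset.prod_product]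
  have : ∀ i, ∏ c ∈ range k, (if c < rowLen p i then f (i, c) else 1) = ∏ c ∈ range (rowLen p i), f (i, c) := by
    intro i
    rw [← Finset.prod_filter]
    congr 1
    ext x
    have := rowLen_le p i
    simp; omega
  simp only [this]
  refine Finset.prod_subset (by simpa using hN) fun x _ hx => ?_
  rw [rowLen_zero p x (by simpa using hx)]; simp

theorem hook {K : Type*} [Field K] (q t : K) (ht : t ≠ 0)
    (hG : ∀ a b : ℕ, a + b ≠ 0 → 1 - q ^ a * t ^ b ≠ 0) {s : ℕ} (p : Nat.Partition s) (n : ℕ) (hs : s ≤ n + 1) :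
    mW q t n (fun i => rowLen p i) =
      (∏ b ∈ boxes p, t ^ (2 * legLength p b) / ((1 - q ^ (armLength p b + 1) * t ^ legLength p b) *
        (1 - q ^ armLength p b * t ^ (legLength p b + 1)))) *
      ∏ i ∈ range (n+1), ∏ c ∈ range (rowLen p i), (1 - q ^ c * t ^ (n + 1 - i)) := by
  let H : ℕ → ℕ → K := fun a d => t ^ (2 * d) / ((1 - q ^ (a + 1) * t ^ d) * (1 - q ^ a * t ^ (d + 1)))
  have hH : ∀ a b, H a b ≠ 0 := fun a b => 
    div_ne_zero (pow_ne_zero _ ht) (mul_ne_zero (hG _ _ (by omega)) (hG _ _ (by omega)))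
  have hm : mW q t n (fun i => rowLen p i) = ∏ i ∈ range (n+1), (singW q t (n - i) (rowLen p i) *
      ∏ j ∈ Ioo i (n+1), pairW q t (j - i) (rowLen p i - rowLen p j)) := by
    unfold mW
    rw [← Fin.prod_univ_eq_prod_range (fun i => singW q t (n - i) (rowLen p i) *
      ∏ j ∈ Ioo i (n+1), pairW q t (j - i) (rowLen p i - rowLen p j))]
    refine Finset.prod_congr rfl fun i _ => ?_
    rw [← Fin.map_valEmbedding_Ioi, Finset.prod_map]
    rfl
  rw [hm, prod_boxes p (n+1) hs, ← Finset.prod_mul_distrib]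
  refine Finset.prod_congr rfl fun i hi => ?_
  rw [mem_range] at hi
  have key := rowProd H hH (rowLen p) (colLen p) (galois p) (rowLen_anti p) i (n+1) hi
  rw [rowLen_zero p (n+1) hs, ← Finset.range_eq_Ico] at key
  simp only [legLength, armLength]
  change _ = (∏ c ∈ range (rowLen p i), H (rowLen p i - (c + 1)) (colLen p c - (i + 1))) * _
  rw [key, mul_right_comm]
  congr 1
  · unfold singW
    rw [Nat.sub_zero, ← Finset.prod_mul_distrib]
    refine Finset.prod_congr rfl fun a _ => ?_
    simp only [H]
    rw [show n + 1 - 1 - i = n - i by omega, show n + 1 - i = n - i + 1 by omega]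
    have h1 := hG (a+1) (n-i) (by omega)
    have h2 := hG a (n-i+1) (by omega)
    field_simp
  · refine Finset.prod_congr rfl fun j hj => ?_
    rw [mem_Ioo] at hj
    unfold pairW
    rw [← Finset.prod_div_distrib]
    refine Finset.prod_congr rfl fun a _ => ?_
    simp only [H]
    obtain ⟨d, hd⟩ : ∃ d, j - i = d + 1 := ⟨j - i - 1, by omega⟩
    rw [hd, Nat.add_sub_cancel]
    have h1 := hG (a+1) d (by omega)
    have h2 := hG a (d+1) (by omega)
    have h3 := hG (a+1) (d+1) (by omega)
    have h4 := hG a (d+1+1) (by omega)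
    rw [show 2 * (d+1) = 2 * d + 2 by ring, pow_add t (2*d) 2]
    field_simp
end

section
open Finset

lemma card_filter_count (m : Multiset ℕ) (a : ℕ) : Multiset.card (m.filter (fun x => a < x)) =
    Multiset.card (m.filter (fun x => a + 1 < x)) + m.count (a+1) := by
  induction m using Multiset.induction_on with
  | empty => simp
  | cons b m ih =>
    rw [Multiset.filter_cons, Multiset.filter_cons, Multiset.count_cons, Multiset.card_add, Multiset.card_add, ih]
    split_ifs <;> simp <;> omega

lemma sum_card_filter (m : Multiset ℕ) (s : ℕ) (h : ∀ a ∈ m, a ≤ s) :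
    ∑ c ∈ range s, Multiset.card (m.filter (fun x => c < x)) = m.sum := by
  induction m using Multiset.induction_on with
  | empty => simp
  | cons b m ih =>
    have hb := h b (by simp)
    simp only [Multiset.filter_cons, Multiset.card_add, Finset.sum_add_distrib]
    rw [ih (fun a ha => h a (by simp [ha])), Multiset.sum_cons]
    congr 1
    have : ∀ c, Multiset.card (if c < b then {b} else (0 : Multiset ℕ)) = if c < b then 1 else 0 := by
      intro c; split_ifs <;> simp
    simp only [this]
    rw [← Finset.sum_filter]
    have : (range s).filter (fun c => c < b) = range b := by ext; simp; omega
    rw [this]; simp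

lemma sum_rowLen {s : ℕ} (p : Nat.Partition s) (N : ℕ) (hN : s ≤ N) :
    ∑ i ∈ range N, rowLen p i = s := by
  have h1 : ∀ i, rowLen p i = ∑ c ∈ range s, if c < rowLen p i then 1 else 0 := by
    intro i
    rw [← Finset.sum_filter]
    have : (range s).filter (fun c => c < rowLen p i) = range (rowLen p i) := by
      ext
      have := rowLen_le p i
      simp; omega
    rw [this]; simp
  rw [Finset.sum_congr rfl fun i _ => h1 i, Finset.sum_comm]
  have h2 : ∀ c ∈ range s, (∑ i ∈ range N, if c < rowLen p i then 1 else 0) =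
      Multiset.card (p.parts.filter (fun x => c < x)) := by
    intro c _
    simp only [galois]
    rw [← Finset.sum_filter]
    have : (range N).filter (fun i => i < colLen p c) = range (colLen p c) := by
      ext
      have := colLen_le p c
      simp; omega
    rw [this]; simp [colLen]
  rw [Finset.sum_congr rfl h2, sum_card_filter]
  · exact p.parts_sum
  · intro a ha
    have := Multiset.le_sum_of_mem ha
    rwa [p.parts_sum] at this

lemma rowLen_inj {s : ℕ} (p p' : Nat.Partition s) (h : ∀ i, rowLen p i = rowLen p' i) : p = p' := by
  have hc : ∀ c, colLen p c = colLen p' c := by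
    intro c
    have h2 : ∀ i, i < colLen p c ↔ i < colLen p' c := fun i => by rw [← galois, ← galois, h]
    have a1 := h2 (colLen p c)
    have a2 := h2 (colLen p' c)
    omega
  ext1
  ext a
  cases a with
  | zero =>
    rw [Multiset.count_eq_zero_of_notMem, Multiset.count_eq_zero_of_notMem]
    · exact fun h => absurd (p'.parts_pos h) (by simp)
    · exact fun h => absurd (p.parts_pos h) (by simp)
  | succ a =>
    have e1 := card_filter_count p.parts a
    have e2 := card_filter_count p'.parts a
    have e3 := hc a
    have e4 := hc (a+1)
    unfold colLen at e3 e4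
    omega

lemma exists_part (n s : ℕ) (l : Fin (n+1) → ℕ) (hl : l ∈ PP n s) :
    ∃ p : Nat.Partition s, ∀ i : Fin (n+1), rowLen p i = l i := by
  obtain ⟨hs, ha⟩ := mem_PP.1 hl
  refine ⟨Nat.Partition.ofSums s (univ.val.map l) hs, fun i => ?_⟩
  set p := Nat.Partition.ofSums s (univ.val.map l) hs with hp
  have hc : ∀ c, colLen p c = (univ.filter (fun i => c < l i)).card := by
    intro c
    have : p.parts = (univ.val.map l).filter (fun x => x ≠ 0) := rfl
    rw [colLen, this, Multiset.filter_filter, Multiset.filter_map, Multiset.card_map]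
    rw [Finset.card_def, Finset.filter_val]
    congr 1
    refine Multiset.filter_congr fun x _ => ?_
    simp; omega
  have hgal : ∀ c, (i : ℕ) < colLen p c ↔ c < l i := by
    intro c
    rw [hc]
    constructor
    · intro h
      by_contra hx
      have : univ.filter (fun i => c < l i) ⊆ Finset.Iio i := by
        intro j hj
        simp only [mem_filter, mem_univ, true_and] at hj
        rw [mem_Iio]
        by_contra hij
        have := ha (not_lt.1 hij)
        omega
      have := Finset.card_le_card this
      rw [Fin.card_Iio] at this
      omega
    · intro h
      have : Finset.Iic i ⊆ univ.filter (fun i => c < l i) := by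
        intro j hj
        rw [mem_Iic] at hj
        have := ha hj
        simp only [mem_filter, mem_univ, true_and]
        omega
      have := Finset.card_le_card this
      rw [Fin.card_Iic] at this
      omega
  have h2 : ∀ c, c < rowLen p i ↔ c < l i := fun c => by rw [galois, hgal]
  have a1 := h2 (rowLen p i)
  have a2 := h2 (l i)
  omega

theorem sum_PP {M : Type*} [AddCommMonoid M] (n s : ℕ) (hs : s ≤ n + 1) (f : (Fin (n+1) → ℕ) → M) :
    ∑ l ∈ PP n s, f l = ∑ p : Nat.Partition s, f (fun i => rowLen p i) := by
  symm
  refine Finset.sum_bij (fun p _ => fun i : Fin (n+1) => rowLen p i) ?_ ?_ ?_ ?_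
  · intro p _
    refine mem_PP.2 ⟨?_, fun a b h => rowLen_anti p h⟩
    rw [Fin.sum_univ_eq_sum_range (fun i => rowLen p i), sum_rowLen p _ hs]
  · intro p _ p' _ h
    refine rowLen_inj p p' fun i => ?_
    by_cases hi : i < n + 1
    · exact congrFun h ⟨i, hi⟩
    · rw [rowLen_zero p i (by omega), rowLen_zero p' i (by omega)]
  · intro l hl
    obtain ⟨p, hp⟩ := exists_part n s l hl
    exact ⟨p, mem_univ _, funext hp⟩
  · intros; rfl
end

section
open Finset

/-- the ring -/
abbrev PS := MvPowerSeries (Fin 3) ℤ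

/-- box weight -/
noncomputable def boxW (a l : ℕ) : PS := (MvPowerSeries.X 1 : PS) ^ (2 * l) *
  Ring.inverse (1 - (MvPowerSeries.X 0 : PS) ^ (a + 1) * MvPowerSeries.X 1 ^ l) *
  Ring.inverse (1 - (MvPowerSeries.X 0 : PS) ^ a * MvPowerSeries.X 1 ^ (l + 1))

/-- truncated term -/
noncomputable def fN (N s : ℕ) : PS := ∑ p : Nat.Partition s,
  (∏ b ∈ boxes p, boxW (armLength p b) (legLength p b)) *
    ∏ i ∈ range N, ∏ c ∈ range (rowLen p i), (1 - (MvPowerSeries.X 0 : PS) ^ c * MvPowerSeries.X 1 ^ (N - i))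

lemma unit_ab (a b : ℕ) (h : a + b ≠ 0) : IsUnit (1 - (MvPowerSeries.X 0 : PS) ^ a * MvPowerSeries.X 1 ^ b) := by
  rw [MvPowerSeries.isUnit_iff_constantCoeff]
  have : (0 : ℤ) ^ a * 0 ^ b = 0 := by
    rw [← pow_add, zero_pow h]
  simp [this]

lemma recB_aux {K : Type*} [Field K] (φ : PS →+* K) (hφ : Function.Injective φ) (n s : ℕ) (hs : s ≤ n + 1) :
    (MvPowerSeries.X 0 : PS) ^ s * fN (n+1) s =
    ∑ k ∈ range (s+1), (∏ j ∈ range (n+1), (1 - Polynomial.C ((MvPowerSeries.X 1 : PS) ^ j) * Polynomial.X)).coeff k *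
      fN (n+1) (s - k) := by
  obtain ⟨q, hqdef⟩ : ∃ q, q = φ (MvPowerSeries.X 0) := ⟨_, rfl⟩
  obtain ⟨t, htdef⟩ : ∃ t, t = φ (MvPowerSeries.X 1) := ⟨_, rfl⟩
  have hX : ∀ i : Fin 3, (MvPowerSeries.X i : PS) ≠ 0 := by
    intro i h
    have := congrArg (MvPowerSeries.coeff (Finsupp.single i 1)) h
    rw [MvPowerSeries.coeff_X] at this
    simp at this
  have hq : q ≠ 0 := fun h => hX 0 (hφ (by rw [map_zero, ← hqdef]; exact h))
  have ht : t ≠ 0 := fun h => hX 1 (hφ (by rw [map_zero, ← htdef]; exact h))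
  have hG : ∀ a b : ℕ, a + b ≠ 0 → 1 - q ^ a * t ^ b ≠ 0 := by
    intro a b h
    have := ((unit_ab a b h).map φ).ne_zero
    simpa only [map_sub, map_one, map_mul, map_pow, ← hqdef, ← htdef] using this
  have hinv : ∀ x : PS, IsUnit x → φ (Ring.inverse x) = (φ x)⁻¹ := by
    intro x hx
    refine eq_inv_of_mul_eq_one_left ?_
    rw [← map_mul, Ring.inverse_mul_cancel _ hx, map_one]
  have hbox : ∀ a l : ℕ, φ (boxW a l) = t ^ (2 * l) / ((1 - q ^ (a + 1) * t ^ l) * (1 - q ^ a * t ^ (l + 1))) := by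
    intro a l
    unfold boxW
    rw [map_mul, map_mul, hinv _ (unit_ab _ _ (by omega)), hinv _ (unit_ab _ _ (by omega))]
    simp only [map_sub, map_one, map_mul, map_pow, ← hqdef, ← htdef]
    rw [div_eq_mul_inv, mul_inv, mul_assoc]
  have hf : ∀ s', s' ≤ n + 1 → φ (fN (n+1) s') = ∑ l ∈ PP n s', mW q t n l := by
    intro s' hs'
    rw [sum_PP n s' hs']
    unfold fN
    rw [map_sum]
    refine Finset.sum_congr rfl fun p _ => ?_
    rw [hook q t ht hG p n hs', map_mul, map_prod]
    simp only [hbox]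
    congr 1
    simp only [map_prod, map_sub, map_one, map_mul, map_pow, ← hqdef, ← htdef]
  apply hφ
  rw [map_mul, map_pow, hf s hs, map_sum, ← hqdef]
  refine (recF q t hq ht hG n s).trans ?_
  refine Finset.sum_congr rfl fun k _ => ?_
  rw [map_mul, hf (s-k) (by omega), ← Polynomial.coeff_map]
  congr 2
  simp only [Polynomial.map_prod, Polynomial.map_sub, Polynomial.map_one, Polynomial.map_mul, Polynomial.map_C,
    Polynomial.map_X, map_pow φ, ← htdef]

theorem recB (n s : ℕ) (hs : s ≤ n + 1) : (MvPowerSeries.X 0 : PS) ^ s * fN (n+1) s =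
    ∑ k ∈ range (s+1), (∏ j ∈ range (n+1), (1 - Polynomial.C ((MvPowerSeries.X 1 : PS) ^ j) * Polynomial.X)).coeff k *
      fN (n+1) (s - k) :=
  recB_aux (algebraMap PS (FractionRing PS)) (IsFractionRing.injective PS (FractionRing PS)) n s hs

lemma fN_zero (N : ℕ) : fN N 0 = 1 := by
  unfold fN
  have hb : ∀ p : Nat.Partition 0, boxes p = ∅ := by intro p; simp [boxes]
  have hr : ∀ (p : Nat.Partition 0) i, rowLen p i = 0 := fun p i => rowLen_zero p i (by omega)
  simp [hb, hr]

end

section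
open Finset

lemma teleA {R : Type*} [CommRing R] (z x : R) (M : ℕ) (f : ℕ → R) (Q : Polynomial R)
    (hrec : ∀ s ≤ M, z ^ s * f s = ∑ k ∈ range (s+1), Q.coeff k * f (s - k)) (hx : x ^ (M+1) = 0) :
    (∑ s ∈ range (M+1), f s * x ^ s) * Q.eval x = ∑ s ∈ range (M+1), f s * (z * x) ^ s := by
  let A : Polynomial R := ∑ s ∈ range (M+1), Polynomial.C (f s) * Polynomial.X ^ s
  let A' : Polynomial R := ∑ s ∈ range (M+1), Polynomial.C (z ^ s * f s) * Polynomial.X ^ s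
  have hA : ∀ i, i ≤ M → A.coeff i = f i := by
    intro i hi
    simp only [A, Polynomial.finset_sum_coeff, Polynomial.coeff_C_mul_X_pow]
    rw [Finset.sum_ite_eq, if_pos (by simp; omega)]
  have hA' : ∀ i, i ≤ M → A'.coeff i = z ^ i * f i := by
    intro i hi
    simp only [A', Polynomial.finset_sum_coeff, Polynomial.coeff_C_mul_X_pow]
    rw [Finset.sum_ite_eq, if_pos (by simp; omega)]
  have hdvd : (Polynomial.X : Polynomial R) ^ (M+1) ∣ Q * A - A' := by
    rw [Polynomial.X_pow_dvd_iff]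
    intro s hs
    rw [Polynomial.coeff_sub, hA' s (by omega), hrec s (by omega), Polynomial.coeff_mul,
      Finset.Nat.sum_antidiagonal_eq_sum_range_succ_mk, sub_eq_zero]
    refine Finset.sum_congr rfl fun k hk => ?_
    rw [hA _ (by omega)]
  obtain ⟨P, hP⟩ := hdvd
  have e := congrArg (Polynomial.eval x) hP
  rw [Polynomial.eval_mul, Polynomial.eval_pow, Polynomial.eval_X, hx, zero_mul, Polynomial.eval_sub,
    Polynomial.eval_mul, sub_eq_zero] at e
  simp only [A, A', Polynomial.eval_finset_sum, Polynomial.eval_mul, Polynomial.eval_C, Polynomial.eval_pow,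
    Polynomial.eval_X] at e
  rw [mul_comm, e]
  refine Finset.sum_congr rfl fun s _ => ?_
  ring

lemma teleB {R : Type*} [CommRing R] (z x : R) (M S : ℕ) (f : ℕ → R) (Q : Polynomial R)
    (hrec : ∀ s ≤ M, z ^ s * f s = ∑ k ∈ range (s+1), Q.coeff k * f (s - k)) (hx : x ^ (M+1) = 0) :
    (∑ s ∈ range (M+1), f s * x ^ s) * ∏ i ∈ range S, Q.eval (z ^ i * x) =
      ∑ s ∈ range (M+1), f s * (z ^ S * x) ^ s := by
  induction S with
  | zero => simp
  | succ S ih =>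
    rw [Finset.prod_range_succ, ← mul_assoc, ih, teleA z (z ^ S * x) M f Q hrec (by rw [mul_pow, hx, mul_zero])]
    refine Finset.sum_congr rfl fun s _ => ?_
    ring

/-- truncation ideal -/
noncomputable def trI (M : ℕ) : Ideal PS :=
  Ideal.span {(MvPowerSeries.X 0 : PS) ^ M, (MvPowerSeries.X 1 : PS) ^ M, (MvPowerSeries.X 2 : PS) ^ M}

lemma coeff_trI (M : ℕ) (f : PS) (hf : f ∈ trI M) (d : Fin 3 →₀ ℕ) (hd : ∀ i, d i < M) :
    MvPowerSeries.coeff d f = 0 := by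
  unfold trI at hf
  have h : ∀ (i : Fin 3) (g : PS), MvPowerSeries.coeff d (g * (MvPowerSeries.X i : PS) ^ M) = 0 := fun i g =>
      MvPowerSeries.X_pow_dvd_iff.1 (dvd_mul_left _ g) d (hd i)
  obtain ⟨a, y, hy, rfl⟩ := Ideal.mem_span_insert.1 hf
  obtain ⟨b, x, hx, rfl⟩ := Ideal.mem_span_insert.1 hy
  obtain ⟨c, rfl⟩ := Ideal.mem_span_singleton'.1 hx
  rw [map_add, map_add, h, h, h]; simp

lemma mk_X0 (M k : ℕ) (h : M ≤ k) : Ideal.Quotient.mk (trI M) (MvPowerSeries.X 0) ^ k = 0 := by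
  refine pow_eq_zero_of_le h ?_
  rw [← map_pow, Ideal.Quotient.eq_zero_iff_mem]
  exact Ideal.subset_span (by simp)

lemma mk_X1 (M k : ℕ) (h : M ≤ k) : Ideal.Quotient.mk (trI M) (MvPowerSeries.X 1) ^ k = 0 := by
  refine pow_eq_zero_of_le h ?_
  rw [← map_pow, Ideal.Quotient.eq_zero_iff_mem]
  exact Ideal.subset_span (by simp)

lemma unit_rs (rs : ℕ × ℕ) : IsUnit (1 - (MvPowerSeries.X 0 : PS) ^ rs.2
      * MvPowerSeries.X 1 ^ (rs.1 + 1) * MvPowerSeries.X 2) := by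
  rw [MvPowerSeries.isUnit_iff_constantCoeff]
  simp

lemma prod_boxes_const {s : ℕ} (p : Nat.Partition s) (x : PS) : ∏ _b ∈ boxes p, x = x ^ s := by
  rw [prod_boxes p s le_rfl (fun _ => x)]
  simp only [Finset.prod_const, card_range]
  rw [Finset.prod_pow_eq_pow_sum, sum_rowLen p s le_rfl]

lemma lhsTerm_eq (s : ℕ) (p : Nat.Partition s) : lhsTerm ⟨s, p⟩ =
    (∏ b ∈ boxes p, boxW (armLength p b) (legLength p b)) * (MvPowerSeries.X 1 * MvPowerSeries.X 2) ^ s := by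
  unfold lhsTerm
  have : ∀ b, ((MvPowerSeries.X 1 : MvPowerSeries (Fin 3) ℤ) ^ (2 * legLength p b + 1) *
        Ring.inverse (1 - (MvPowerSeries.X 0 : MvPowerSeries (Fin 3) ℤ) ^ (armLength p b + 1)
            * MvPowerSeries.X 1 ^ legLength p b) *
        Ring.inverse (1 - (MvPowerSeries.X 0 : MvPowerSeries (Fin 3) ℤ) ^ armLength p b
            * MvPowerSeries.X 1 ^ (legLength p b + 1))) =
      boxW (armLength p b) (legLength p b) * (MvPowerSeries.X 1 : PS) := by
    intro b; unfold boxW; ring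
  simp only [this]
  rw [Finset.prod_mul_distrib, prod_boxes_const]
  ring

lemma main_mod (M N S : ℕ) (hM : 1 ≤ M) (hN : 2 * M ≤ N) (hS : M ≤ S) :
    Ideal.Quotient.mk (trI M) (∑ s ∈ range (M+1), ∑ p : Nat.Partition s, lhsTerm ⟨s, p⟩) =
      Ideal.Quotient.mk (trI M) (∏ rs ∈ range N ×ˢ range S, rhsFactor rs) := by
  obtain ⟨n, rfl⟩ : ∃ n, N = n + 1 := ⟨N - 1, by omega⟩
  set π := Ideal.Quotient.mk (trI M) with hπ
  have hf : ∀ s ∈ range (M+1), π (∑ p : Nat.Partition s, lhsTerm ⟨s, p⟩) =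
      π (fN (n+1) s) * (π (MvPowerSeries.X 1 * MvPowerSeries.X 2)) ^ s := by
    intro s hs
    rw [mem_range] at hs
    unfold fN
    rw [map_sum, map_sum, Finset.sum_mul]
    refine Finset.sum_congr rfl fun p _ => ?_
    rw [lhsTerm_eq, map_mul, map_mul, map_pow]
    congr 1
    have : π (∏ i ∈ range (n+1), ∏ c ∈ range (rowLen p i),
        (1 - (MvPowerSeries.X 0 : PS) ^ c * MvPowerSeries.X 1 ^ (n + 1 - i))) = 1 := by
      rw [map_prod]
      refine Finset.prod_eq_one fun i _ => ?_
      by_cases hi : s ≤ i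
      · rw [rowLen_zero p i hi]; simp
      · rw [map_prod]
        refine Finset.prod_eq_one fun c _ => ?_
        rw [map_sub, map_mul, map_pow, map_pow, hπ, mk_X1 M _ (by omega), map_one, mul_zero, sub_zero]
    rw [this, mul_one]
  rw [map_sum, Finset.sum_congr rfl hf]
  let Q : Polynomial (PS ⧸ trI M) := ∏ j ∈ range (n+1), (1 - Polynomial.C ((π (MvPowerSeries.X 1)) ^ j) * Polynomial.X)
  have hQ : Q = (∏ j ∈ range (n+1), (1 - Polynomial.C ((MvPowerSeries.X 1 : PS) ^ j) * Polynomial.X)).map π := by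
    simp only [Q, Polynomial.map_prod, Polynomial.map_sub, Polynomial.map_one, Polynomial.map_mul, Polynomial.map_C,
      Polynomial.map_X, map_pow π]
  have key := teleB (π (MvPowerSeries.X 0)) (π (MvPowerSeries.X 1 * MvPowerSeries.X 2)) M S
    (fun s => π (fN (n+1) s)) Q (by
      intro s hs
      have := congrArg π (recB n s (by omega))
      rw [map_mul, map_pow, map_sum] at this
      rw [this]
      refine Finset.sum_congr rfl fun k _ => ?_
      rw [hQ, Polynomial.coeff_map, map_mul]) (by
      rw [map_mul, mul_pow, hπ, mk_X1 M _ (by omega), zero_mul])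
  have h1 : ∑ s ∈ range (M+1), π (fN (n+1) s) *
      (π (MvPowerSeries.X 0) ^ S * π (MvPowerSeries.X 1 * MvPowerSeries.X 2)) ^ s = 1 := by
    rw [hπ, mk_X0 M S hS, zero_mul, Finset.sum_range_succ', Finset.sum_eq_zero]
    · rw [fN_zero]; simp
    · intro s _; simp
  rw [h1] at key
  have h2 : ∏ i ∈ range S, Q.eval (π (MvPowerSeries.X 0) ^ i * π (MvPowerSeries.X 1 * MvPowerSeries.X 2)) =
      π (∏ rs ∈ range (n+1) ×ˢ range S, (1 - (MvPowerSeries.X 0 : PS) ^ rs.2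
      * MvPowerSeries.X 1 ^ (rs.1 + 1) * MvPowerSeries.X 2)) := by
    rw [Finset.prod_product_right, map_prod]
    refine Finset.prod_congr rfl fun i _ => ?_
    rw [Polynomial.eval_prod, map_prod]
    refine Finset.prod_congr rfl fun j _ => ?_
    simp only [Polynomial.eval_sub, Polynomial.eval_one, Polynomial.eval_mul, Polynomial.eval_C, Polynomial.eval_X,
      Polynomial.eval_pow, map_sub, map_one, map_mul, map_pow]
    ring
  rw [h2] at key
  have h3 : π (∏ rs ∈ range (n+1) ×ˢ range S, (1 - (MvPowerSeries.X 0 : PS) ^ rs.2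
      * MvPowerSeries.X 1 ^ (rs.1 + 1) * MvPowerSeries.X 2)) * π (∏ rs ∈ range (n+1) ×ˢ range S, rhsFactor rs) = 1 := by
    rw [← map_mul, ← Finset.prod_mul_distrib, Finset.prod_eq_one, map_one]
    intro rs _
    exact Ring.mul_inverse_cancel _ (unit_rs rs)
  exact left_inv_eq_right_inv key h3

lemma rhs_mod (M : ℕ) (rs : ℕ × ℕ) (h : M ≤ rs.1 ∨ M ≤ rs.2) : Ideal.Quotient.mk (trI M) (rhsFactor rs) = 1 := by
  have h1 := congrArg (Ideal.Quotient.mk (trI M)) (Ring.mul_inverse_cancel _ (unit_rs rs))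
  have h2 : Ideal.Quotient.mk (trI M) (1 - (MvPowerSeries.X 0 : PS) ^ rs.2
      * MvPowerSeries.X 1 ^ (rs.1 + 1) * MvPowerSeries.X 2) = 1 := by
    rw [map_sub, map_mul, map_mul, map_pow, map_pow, map_one]
    rcases h with h | h
    · rw [mk_X1 M _ (by omega)]; simp
    · rw [mk_X0 M _ h]; simp
  rw [map_mul, h2, one_mul, map_one] at h1
  exact h1

lemma tendsto_iff {ι : Type*} (l : Filter ι) (F : ι → PS) (a : PS)
    (h : ∀ d, ∀ᶠ i in l, MvPowerSeries.coeff d (F i) = MvPowerSeries.coeff d a) :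
    Filter.Tendsto F l (nhds a) := by
  refine (tendsto_pi_nhds (A := fun _ : Fin 3 →₀ ℕ => ℤ) (f := F) (g := a)).2 ?_
  intro d
  refine tendsto_const_nhds.congr' ?_
  filter_upwards [h d] with i hi
  exact hi.symm

instance : T2Space (MvPowerSeries (Fin 3) ℤ) :=
  inferInstanceAs (T2Space ((Fin 3 →₀ ℕ) → ℤ))

lemma coeff_lhs (s : ℕ) (p : Nat.Partition s) (d : Fin 3 →₀ ℕ) (h : d 2 < s) :
    MvPowerSeries.coeff d (lhsTerm ⟨s, p⟩) = 0 := by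
  refine MvPowerSeries.X_pow_dvd_iff.1 (?_ : (MvPowerSeries.X 2 : PS) ^ s ∣ _) d h
  exact dvd_mul_right _ _

/-- the common value -/
noncomputable def val : PS := fun d =>
  MvPowerSeries.coeff d (∑ s ∈ range (d 2 + 1), ∑ p : Nat.Partition s, lhsTerm ⟨s, p⟩)

lemma coeff_val (d : Fin 3 →₀ ℕ) (M : ℕ) (h : d 2 ≤ M) : MvPowerSeries.coeff d val =
    MvPowerSeries.coeff d (∑ s ∈ range (M + 1), ∑ p : Nat.Partition s, lhsTerm ⟨s, p⟩) := by
  change MvPowerSeries.coeff d (∑ s ∈ range (d 2 + 1), ∑ p : Nat.Partition s, lhsTerm ⟨s, p⟩) = _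
  rw [map_sum, map_sum]
  refine Finset.sum_subset (fun x hx => by simp at hx ⊢; omega) fun s _ hs => ?_
  rw [map_sum]
  refine Finset.sum_eq_zero fun p _ => coeff_lhs s p d (by simpa using hs)

lemma hasSum_lhs : HasSum lhsTerm val := by
  unfold HasSum
  rw [SummationFilter.unconditional_filter]
  refine tendsto_iff _ _ _ fun d => ?_
  filter_upwards [Filter.eventually_ge_atTop ((range (d 2 + 1)).sigma (fun s => (univ : Finset (Nat.Partition s))))]
    with A hA
  rw [coeff_val d (d 2) le_rfl, Finset.sum_sigma' (range (d 2 + 1)) (fun s => univ) (fun s p => lhsTerm ⟨s, p⟩), map_sum, map_sum]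
  symm
  refine Finset.sum_subset hA fun x _ hx => ?_
  exact coeff_lhs x.1 x.2 d (by simpa using hx)

lemma hasProd_rhs : HasProd rhsFactor val := by
  unfold HasProd
  rw [SummationFilter.unconditional_filter]
  refine tendsto_iff _ _ _ fun d => ?_
  obtain ⟨M, hM⟩ : ∃ M, ∀ i, d i < M := ⟨d 0 + d 1 + d 2 + 1, fun i => by fin_cases i <;> simp <;> omega⟩
  have hM1 : 1 ≤ M := by have := hM 0; omega
  filter_upwards [Filter.eventually_ge_atTop (range (2 * M) ×ˢ range (2 * M))] with A hA
  rw [coeff_val d M (hM 2).le, ← sub_eq_zero, ← map_sub]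
  refine coeff_trI M _ ?_ d hM
  rw [← Ideal.Quotient.eq_zero_iff_mem, map_sub, main_mod M (2*M) (2*M) hM1 le_rfl (by omega), sub_eq_zero,
    map_prod, map_prod]
  symm
  refine Finset.prod_subset hA fun x _ hx => rhs_mod M x ?_
  simp only [mem_product, mem_range, not_and_or, not_lt] at hx
  omega

end

/-- In `ℤ[[z,u,T]]`:
`Σ_λ T^{|λ|} ∏_{boxes} u^{2l+1}(1−z^{a+1}u^{l})⁻¹(1−z^{a}u^{l+1})⁻¹
  = ∏_{r≥1, s≥0} (1−z^{s}u^{r}T)⁻¹`,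
with the sum over all partitions converging (being `Summable`) and the infinite product
converging (being `Multipliable`) in the formal power series topology. -/
theorem statement17 :
    Summable lhsTerm ∧ Multipliable rhsFactor ∧
      ∑' p : Σ m : ℕ, Nat.Partition m, lhsTerm p = ∏' rs : ℕ × ℕ, rhsFactor rs := by
  exact ⟨hasSum_lhs.summable, hasProd_rhs.multipliable, hasSum_lhs.tsum_eq.trans hasProd_rhs.tprod_eq.symm⟩

end Statement17
end

section
/- Let g ≥ 0 and n ≥ 0 be integers. In the polynomial ring ℚ[α,β,γ], for nonnegative integers r, s, t satisfying t ≤ g, r + 3s + 3t > 3g − 3 + n and r + 2s + 2t ≥ 2g − 2 + n, set c := r + 3s + 2t − 2g + 2 − n and ρ^{n,g}_{r,s,t} := Σ_{i=0}^{min(r,s,g−t)} (c−i)! · α^{r−i}/(r−i)! · β^{s−i}/(s−i)! · (2γ)^{t+i}/i! (note c ≥ s ≥ i, so (c−i)! is well defined). Let I^g_n ⊆ ℚ[α,β,γ] be the ideal generated by γ^{g+1} together with all such polynomials ρ^{n,g}_{r,s,t}. Assign weights 2, 2, 4 to α, β, γ respectively. If x ∈ ℚ[α,β,γ] is weighted-homogeneous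 of weight w with 0 ≤ w < 3g − 3 + n, and x·α^{3g−3+n−w} ∈ I^g_n, then x ∈ I^g_n. -/
namespace Statement19

open MvPolynomial

/-- The relation
`ρ^{n,g}_{r,s,t} = Σ_{i=0}^{min(r,s,g−t)} (c−i)!·α^{r−i}/(r−i)!·β^{s−i}/(s−i)!·(2γ)^{t+i}/i!`
in `ℚ[α,β,γ]` (with `α = X 0`, `β = X 1`, `γ = X 2`), where
`c = r+3s+2t−2g+2−n` (a nonnegative integer `≥ s` under the intended constraints,
written with truncated subtraction). -/
noncomputable def rho (g n r s t : ℕ) : MvPolynomial (Fin 3) ℚ :=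
  ∑ i ∈ Finset.range (min r (min s (g - t)) + 1),
    C ((((r + 3 * s + 2 * t + 2 - (2 * g + n) - i).factorial : ℚ))
        / ((r - i).factorial : ℚ) / ((s - i).factorial : ℚ) / (i.factorial : ℚ))
      * X 0 ^ (r - i) * X 1 ^ (s - i) * (C 2 * X 2) ^ (t + i)

/-- The ideal `I^g_n ⊆ ℚ[α,β,γ]` generated by `γ^{g+1}` together with the relations
`ρ^{n,g}_{r,s,t}` for all `r,s,t ≥ 0` with `t ≤ g`, `r+3s+3t > 3g−3+n` and
`r+2s+2t ≥ 2g−2+n`. -/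
noncomputable def relIdeal (g n : ℕ) : Ideal (MvPolynomial (Fin 3) ℚ) :=
  Ideal.span (insert ((X 2 : MvPolynomial (Fin 3) ℚ) ^ (g + 1))
    {p | ∃ r s t : ℕ, t ≤ g ∧
      3 * (g : ℤ) - 3 + n < (r : ℤ) + 3 * s + 3 * t ∧
      2 * (g : ℤ) - 2 + n ≤ (r : ℤ) + 2 * s + 2 * t ∧
      p = rho g n r s t})

/-- The exponent vector of `α^i β^j γ^k`. -/
noncomputable def ex (i j k : ℕ) : Fin 3 →₀ ℕ :=
  Finsupp.single 0 i + Finsupp.single 1 j + Finsupp.single 2 k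

@[simp] lemma ex_zero (i j k : ℕ) : ex i j k 0 = i := by simp [ex]
@[simp] lemma ex_one (i j k : ℕ) : ex i j k 1 = j := by simp [ex]
@[simp] lemma ex_two (i j k : ℕ) : ex i j k 2 = k := by simp [ex]

lemma ex_eta (m : Fin 3 →₀ ℕ) : ex (m 0) (m 1) (m 2) = m := by
  ext s; fin_cases s <;> simp

lemma ex_inj {i j k i' j' k' : ℕ} : ex i j k = ex i' j' k' ↔ i = i' ∧ j = j' ∧ k = k' := by
  constructor
  · intro h
    refine ⟨?_, ?_, ?_⟩
    · simpa using DFunLike.congr_fun h 0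
    · simpa using DFunLike.congr_fun h 1
    · simpa using DFunLike.congr_fun h 2
  · rintro ⟨rfl, rfl, rfl⟩; rfl

/-- The normalising weight of the monomial `α^i β^j γ^k`. -/
noncomputable def wt (g i j k : ℕ) : ℚ :=
  2 ^ k * ((max (j + k) g - k).factorial : ℚ)
    / ((k.factorial : ℚ) * (i.factorial : ℚ) * (j.factorial : ℚ))

lemma wt_ne (g i j k : ℕ) : wt g i j k ≠ 0 := by
  unfold wt; positivity

/-- The explicit description of the ideal. -/
def JC (g n : ℕ) (p : MvPolynomial (Fin 3) ℚ) : Prop :=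
  ∀ a b : ℕ, ∃ P : Polynomial ℚ,
    (P ≠ 0 → P.natDegree + 3 * g + n < a + 2 * b + min b g + 3) ∧
    ∀ i j k : ℕ, i + k = a → j + k = b → k ≤ g →
      coeff (ex i j k) p = wt g i j k * P.eval (k : ℚ)

lemma JC_zero (g n : ℕ) : JC g n 0 := by
  intro a b
  exact ⟨0, by simp, by simp⟩

lemma JC_add {g n : ℕ} {p q : MvPolynomial (Fin 3) ℚ} (hp : JC g n p) (hq : JC g n q) :
    JC g n (p + q) := by
  intro a b
  obtain ⟨P, hP, hP'⟩ := hp a b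
  obtain ⟨Q, hQ, hQ'⟩ := hq a b
  refine ⟨P + Q, ?_, ?_⟩
  · intro h
    by_cases h1 : P = 0
    · subst h1; simp at h ⊢; simpa using hQ h
    by_cases h2 : Q = 0
    · subst h2; simpa using hP h1
    have := Polynomial.natDegree_add_le P Q
    have := hP h1
    have := hQ h2
    omega
  · intro i j k hi hj hk
    rw [coeff_add, hP' i j k hi hj hk, hQ' i j k hi hj hk, Polynomial.eval_add]; ring

lemma JC_C {g n : ℕ} {p : MvPolynomial (Fin 3) ℚ} (c : ℚ) (hp : JC g n p) :
    JC g n (C c * p) := by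
  intro a b
  obtain ⟨P, hP, hP'⟩ := hp a b
  refine ⟨Polynomial.C c * P, ?_, ?_⟩
  · intro h
    have := Polynomial.natDegree_C_mul_le c P
    have := hP (right_ne_zero_of_mul h)
    omega
  · intro i j k hi hj hk
    rw [coeff_C_mul, hP' i j k hi hj hk]; simp; ring

lemma ex_sub0 (i j k : ℕ) : ex (i + 1) j k = ex i j k + Finsupp.single 0 1 := by
  ext s; fin_cases s <;> simp [ex]
lemma ex_sub1 (i j k : ℕ) : ex i (j + 1) k = ex i j k + Finsupp.single 1 1 := by
  ext s; fin_cases s <;> simp [ex]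
lemma ex_sub2 (i j k : ℕ) : ex i j (k + 1) = ex i j k + Finsupp.single 2 1 := by
  ext s; fin_cases s <;> simp [ex]

lemma coeff_X0 (p : MvPolynomial (Fin 3) ℚ) (i j k : ℕ) :
    coeff (ex (i + 1) j k) (p * X 0) = coeff (ex i j k) p := by
  rw [ex_sub0, coeff_mul_X]
lemma coeff_X1 (p : MvPolynomial (Fin 3) ℚ) (i j k : ℕ) :
    coeff (ex i (j + 1) k) (p * X 1) = coeff (ex i j k) p := by
  rw [ex_sub1, coeff_mul_X]
lemma coeff_X2 (p : MvPolynomial (Fin 3) ℚ) (i j k : ℕ) :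
    coeff (ex i j (k + 1)) (p * X 2) = coeff (ex i j k) p := by
  rw [ex_sub2, coeff_mul_X]
lemma coeff_X0' (p : MvPolynomial (Fin 3) ℚ) (j k : ℕ) :
    coeff (ex 0 j k) (p * X 0) = 0 := by
  rw [coeff_mul_X']; simp
lemma coeff_X1' (p : MvPolynomial (Fin 3) ℚ) (i k : ℕ) :
    coeff (ex i 0 k) (p * X 1) = 0 := by
  rw [coeff_mul_X']; simp
lemma coeff_X2' (p : MvPolynomial (Fin 3) ℚ) (i j : ℕ) :
    coeff (ex i j 0) (p * X 2) = 0 := by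
  rw [coeff_mul_X']; simp

lemma natDegree_lin (c : ℚ) : (Polynomial.C c - Polynomial.X).natDegree ≤ 1 := by
  refine (Polynomial.natDegree_sub_le _ _).trans ?_
  simp

lemma JC_X0 {g n : ℕ} {p : MvPolynomial (Fin 3) ℚ} (hp : JC g n p) : JC g n (p * X 0) := by
  intro a b
  rcases a with _ | a
  · refine ⟨0, by simp, ?_⟩
    intro i j k hi hj hk
    obtain rfl : i = 0 := by omega
    rw [coeff_X0']; simp
  obtain ⟨P, hP, hP'⟩ := hp a b
  refine ⟨P * (Polynomial.C ((a : ℚ) + 1) - Polynomial.X), ?_, ?_⟩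
  · intro h
    have := hP (left_ne_zero_of_mul h)
    have h2 := Polynomial.natDegree_mul_le (p := P)
      (q := (Polynomial.C ((a : ℚ) + 1) - Polynomial.X))
    have := natDegree_lin ((a : ℚ) + 1)
    omega
  · intro i j k hi hj hk
    rcases i with _ | i
    · obtain rfl : k = a + 1 := by omega
      rw [coeff_X0']; simp
    · rw [coeff_X0, hP' i j k (by omega) hj hk]
      obtain rfl : a = i + k := by omega
      simp only [wt, Nat.factorial_succ, Polynomial.eval_mul, Polynomial.eval_sub,
        Polynomial.eval_C, Polynomial.eval_X]
      push_cast
      field_simp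
      ring

lemma JC_X1 {g n : ℕ} {p : MvPolynomial (Fin 3) ℚ} (hp : JC g n p) : JC g n (p * X 1) := by
  intro a b
  rcases b with _ | b
  · refine ⟨0, by simp, ?_⟩
    intro i j k hi hj hk
    obtain rfl : j = 0 := by omega
    rw [coeff_X1']; simp
  obtain ⟨P, hP, hP'⟩ := hp a b
  by_cases hb : b < g
  · refine ⟨P * (Polynomial.C ((b : ℚ) + 1) - Polynomial.X), ?_, ?_⟩
    · intro h
      have := hP (left_ne_zero_of_mul h)
      have h2 := Polynomial.natDegree_mul_le (p := P)
        (q := (Polynomial.C ((b : ℚ) + 1) - Polynomial.X))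
      have := natDegree_lin ((b : ℚ) + 1)
      omega
    · intro i j k hi hj hk
      rcases j with _ | j
      · obtain rfl : k = b + 1 := by omega
        rw [coeff_X1']; simp
      · rw [coeff_X1, hP' i j k hi (by omega) hk]
        obtain rfl : b = j + k := by omega
        have e1 : max (j + k) g = g := by omega
        have e2 : max (j + 1 + k) g = g := by omega
        simp only [wt, e1, e2, Nat.factorial_succ, Polynomial.eval_mul, Polynomial.eval_sub,
          Polynomial.eval_C, Polynomial.eval_X]
        push_cast
        field_simp
        ring
  · refine ⟨P, ?_, ?_⟩
    · intro h
      have := hP h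
      omega
    · intro i j k hi hj hk
      rcases j with _ | j
      · omega
      · rw [coeff_X1, hP' i j k hi (by omega) hk]
        have e1 : max (j + k) g - k = j := by omega
        have e2 : max (j + 1 + k) g - k = j + 1 := by omega
        simp only [wt, e1, e2, Nat.factorial_succ]
        push_cast
        field_simp

lemma natDegree_shift (P : Polynomial ℚ) :
    (P.comp (Polynomial.X - Polynomial.C 1)).natDegree = P.natDegree := by
  rw [Polynomial.natDegree_comp, Polynomial.natDegree_X_sub_C, mul_one]

lemma JC_X2 {g n : ℕ} {p : MvPolynomial (Fin 3) ℚ} (hp : JC g n p) : JC g n (p * X 2) := by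
  intro a b
  by_cases hab : a = 0 ∨ b = 0
  · refine ⟨0, by simp, ?_⟩
    intro i j k hi hj hk
    obtain rfl : k = 0 := by omega
    rw [coeff_X2']; simp
  obtain ⟨a, rfl⟩ : ∃ a', a = a' + 1 := ⟨a - 1, by omega⟩
  obtain ⟨b, rfl⟩ : ∃ b', b = b' + 1 := ⟨b - 1, by omega⟩
  obtain ⟨P, hP, hP'⟩ := hp a b
  by_cases hb : b < g
  · refine ⟨P.comp (Polynomial.X - Polynomial.C 1) * (Polynomial.C (1/2) * Polynomial.X
      * (Polynomial.C ((g : ℚ) + 1) - Polynomial.X)), ?_, ?_⟩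
    · intro h
      have hP0 : P ≠ 0 := by rintro rfl; simp at h
      have := hP hP0
      have h2 := Polynomial.natDegree_mul_le (p := P.comp (Polynomial.X - Polynomial.C 1))
        (q := (Polynomial.C (1/2) * Polynomial.X * (Polynomial.C ((g : ℚ) + 1) - Polynomial.X)))
      rw [natDegree_shift] at h2
      have h3 := Polynomial.natDegree_mul_le (p := Polynomial.C (1/2 : ℚ) * Polynomial.X)
        (q := (Polynomial.C ((g : ℚ) + 1) - Polynomial.X))
      have := natDegree_lin ((g : ℚ) + 1)
      have h4 := (Polynomial.natDegree_C_mul_le (1/2 : ℚ) Polynomial.X).trans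
        Polynomial.natDegree_X_le
      omega
    · intro i j k hi hj hk
      rcases k with _ | k
      · rw [coeff_X2']; simp
      · rw [coeff_X2, hP' i j k (by omega) (by omega) (by omega)]
        have e1 : max (j + k) g - k = (g - (k + 1)) + 1 := by omega
        have e2 : max (j + (k + 1)) g - (k + 1) = g - (k + 1) := by omega
        have e3 : (g : ℚ) = ((g - (k + 1) : ℕ) : ℚ) + k + 1 := by
          rw [Nat.cast_sub hk]; push_cast; ring
        simp only [wt, e1, e2, Nat.factorial_succ, Polynomial.eval_mul, Polynomial.eval_sub,
          Polynomial.eval_C, Polynomial.eval_X, Polynomial.eval_comp]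
        rw [e3]
        push_cast
        rw [show (k : ℚ) + 1 - 1 = k by ring]
        generalize ((g - (k + 1) : ℕ) : ℚ) = y
        field_simp
        ring
  · refine ⟨P.comp (Polynomial.X - Polynomial.C 1) * (Polynomial.C (1/2) * Polynomial.X), ?_, ?_⟩
    · intro h
      have hP0 : P ≠ 0 := by rintro rfl; simp at h
      have := hP hP0
      have h2 := Polynomial.natDegree_mul_le (p := P.comp (Polynomial.X - Polynomial.C 1))
        (q := (Polynomial.C (1/2) * Polynomial.X))
      rw [natDegree_shift] at h2
      have h4 := (Polynomial.natDegree_C_mul_le (1/2 : ℚ) Polynomial.X).trans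
        Polynomial.natDegree_X_le
      omega
    · intro i j k hi hj hk
      rcases k with _ | k
      · rw [coeff_X2']; simp
      · rw [coeff_X2, hP' i j k (by omega) (by omega) (by omega)]
        have e1 : max (j + k) g - k = j := by omega
        have e2 : max (j + (k + 1)) g - (k + 1) = j := by omega
        simp only [wt, e1, e2, Nat.factorial_succ, Polynomial.eval_mul, Polynomial.eval_sub,
          Polynomial.eval_C, Polynomial.eval_X, Polynomial.eval_comp]
        push_cast
        rw [show (k : ℚ) + 1 - 1 = k by ring]
        field_simp
        ring

lemma JC_mul {g n : ℕ} (q : MvPolynomial (Fin 3) ℚ) :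
    ∀ p : MvPolynomial (Fin 3) ℚ, JC g n p → JC g n (q * p) := by
  induction q using MvPolynomial.induction_on with
  | C c => intro p hp; exact JC_C c hp
  | add q₁ q₂ h₁ h₂ => intro p hp; rw [add_mul]; exact JC_add (h₁ p hp) (h₂ p hp)
  | mul_X q s ih =>
    intro p hp
    rw [mul_assoc, mul_comm (X s) p]
    apply ih
    fin_cases s
    · exact JC_X0 hp
    · exact JC_X1 hp
    · exact JC_X2 hp

/-- The element of bidegree `(a,b)` attached to the polynomial `Q`. -/
noncomputable def F (g a b : ℕ) (Q : Polynomial ℚ) : MvPolynomial (Fin 3) ℚ :=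
  ∑ k ∈ Finset.range (min a (min b g) + 1),
    monomial (ex (a - k) (b - k) k) (wt g (a - k) (b - k) k * Q.eval (k : ℚ))

lemma F_add (g a b : ℕ) (P Q : Polynomial ℚ) : F g a b (P + Q) = F g a b P + F g a b Q := by
  unfold F
  rw [← Finset.sum_add_distrib]
  refine Finset.sum_congr rfl fun k _ => ?_
  rw [Polynomial.eval_add, mul_add, map_add]

lemma F_C (g a b : ℕ) (c : ℚ) (Q : Polynomial ℚ) :
    F g a b (Polynomial.C c * Q) = C c * F g a b Q := by
  unfold F
  rw [Finset.mul_sum]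
  refine Finset.sum_congr rfl fun k _ => ?_
  rw [C_mul_monomial, Polynomial.eval_mul, Polynomial.eval_C]
  congr 1; ring

lemma coeff_F (g a b : ℕ) (Q : Polynomial ℚ) (i j k : ℕ) (hk : k ≤ g) :
    coeff (ex i j k) (F g a b Q) =
      if a = i + k ∧ b = j + k then wt g i j k * Q.eval (k : ℚ) else 0 := by
  unfold F
  rw [coeff_sum]
  simp only [coeff_monomial, ex_inj]
  split_ifs with h
  · obtain ⟨rfl, rfl⟩ := h
    rw [Finset.sum_eq_single k]
    · simp
    · intro k' _ hne
      rw [if_neg]; tauto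
    · intro h
      simp at h
      omega
  · refine Finset.sum_eq_zero fun k' hk' => ?_
    rw [Finset.mem_range] at hk'
    rw [if_neg]
    omega

lemma JC_F {g n a b : ℕ} {Q : Polynomial ℚ}
    (hQ : Q ≠ 0 → Q.natDegree + 3 * g + n < a + 2 * b + min b g + 3) :
    JC g n (F g a b Q) := by
  intro a' b'
  by_cases h : a' = a ∧ b' = b
  · obtain ⟨rfl, rfl⟩ := h
    refine ⟨Q, hQ, ?_⟩
    intro i j k hi hj hk
    rw [coeff_F _ _ _ _ _ _ _ hk, if_pos ⟨hi.symm, hj.symm⟩]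
  · refine ⟨0, by simp, ?_⟩
    intro i j k hi hj hk
    rw [coeff_F _ _ _ _ _ _ _ hk, if_neg (by omega)]
    simp

/-- The polynomial attached to `ρ`. -/
noncomputable def Wp (M q : ℕ) : Polynomial ℚ :=
  (ascPochhammer ℚ q).comp (Polynomial.C ((M : ℚ) + 1) - Polynomial.X)

lemma Wp_natDegree (M q : ℕ) : (Wp M q).natDegree ≤ q := by
  unfold Wp
  refine Polynomial.natDegree_comp_le.trans ?_
  rw [ascPochhammer_natDegree]
  calc q * _ ≤ q * 1 := Nat.mul_le_mul_left _ (natDegree_lin _)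
    _ = q := mul_one q

lemma Wp_eval (M q k : ℕ) (hk : k ≤ M) :
    (Wp M q).eval (k : ℚ) * ((M - k).factorial : ℚ) = ((M - k + q).factorial : ℚ) := by
  unfold Wp
  rw [Polynomial.eval_comp]
  have : Polynomial.eval (k : ℚ) (Polynomial.C ((M : ℚ) + 1) - Polynomial.X)
      = ((M - k + 1 : ℕ) : ℚ) := by
    simp; rw [Nat.cast_sub hk]; ring
  rw [this, ascPochhammer_nat_eq_natCast_ascFactorial, mul_comm]
  exact_mod_cast Nat.factorial_mul_ascFactorial (M - k) q

lemma rho_eq (g n r s t q : ℕ) (ht : t ≤ g) (h1 : 2 * g + n ≤ r + 2 * s + 2 * t + 2)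
    (hq : r + 3 * s + 3 * t + 2 = max (s + t) g + q + 2 * g + n) :
    rho g n r s t = F g (r + t) (s + t) (descPochhammer ℚ t * Wp (max (s + t) g) q) := by
  unfold F rho
  have hsplit : min (r + t) (min (s + t) g) + 1 = t + (min r (min s (g - t)) + 1) := by omega
  rw [hsplit]
  generalize hK : min r (min s (g - t)) + 1 = K
  rw [Finset.sum_range_add]
  refine Eq.trans ?_ (congrArg₂ (· + ·) (Finset.sum_eq_zero (fun k hk => ?_)).symm rfl)
  · simp only [zero_add]
    refine Finset.sum_congr rfl fun i hi => ?_
    rw [Finset.mem_range] at hi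
    obtain ⟨r, rfl⟩ : ∃ r', r = r' + i := ⟨r - i, by omega⟩
    obtain ⟨s, rfl⟩ : ∃ s', s = s' + i := ⟨s - i, by omega⟩
    have e1 : r + i + t - (t + i) = r := by omega
    have e2 : s + i + t - (t + i) = s := by omega
    have e3 : s + (t + i) = s + i + t := by omega
    rw [e1, e2, Nat.add_sub_cancel, Nat.add_sub_cancel]
    have hW := Wp_eval (max (s + i + t) g) q (t + i) (by omega)
    have e4 : max (s + i + t) g - (t + i) + q
      = r + i + 3 * (s + i) + 2 * t + 2 - (2 * g + n) - i := by omega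
    rw [e4] at hW
    rw [← hW]
    have hd : (descPochhammer ℚ t).eval ((t + i : ℕ) : ℚ) * (i.factorial : ℚ)
        = ((t + i).factorial : ℚ) := by
      rw [descPochhammer_eval_eq_descFactorial, mul_comm]
      have := Nat.factorial_mul_descFactorial (n := t + i) (k := t) (by omega)
      rw [Nat.add_sub_cancel_left] at this
      exact_mod_cast this
    have hm : monomial (ex r s (t + i)) (wt g r s (t + i) *
        (descPochhammer ℚ t * Wp (max (s + i + t) g) q).eval ((t + i : ℕ) : ℚ))
        = C (wt g r s (t + i) *
        (descPochhammer ℚ t * Wp (max (s + i + t) g) q).eval ((t + i : ℕ) : ℚ)) * X 0 ^ r * X 1 ^ s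
          * X 2 ^ (t + i) := by
      rw [X_pow_eq_monomial, X_pow_eq_monomial, X_pow_eq_monomial, C_mul_monomial,
        monomial_mul, monomial_mul]
      simp [ex]
    rw [hm, mul_pow, ← C_pow]
    have hc : wt g r s (t + i) *
        (descPochhammer ℚ t * Wp (max (s + i + t) g) q).eval ((t + i : ℕ) : ℚ)
        = ((Wp (max (s + i + t) g) q).eval ((t + i : ℕ) : ℚ)
          * ((max (s + i + t) g - (t + i)).factorial : ℚ))
          / (r.factorial : ℚ) / (s.factorial : ℚ) / (i.factorial : ℚ) * 2 ^ (t + i) := by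
      unfold wt
      rw [← hd, e3, Polynomial.eval_mul]
      have : (descPochhammer ℚ t).eval ((t + i : ℕ) : ℚ) ≠ 0 := by
        intro h0
        rw [h0, zero_mul] at hd
        exact (Nat.cast_ne_zero.mpr (Nat.factorial_ne_zero _)) hd.symm
      field_simp
    rw [hc]
    simp only [map_mul]
    ring
  · rw [Finset.mem_range] at hk
    rw [Polynomial.eval_mul, descPochhammer_eval_eq_descFactorial,
      Nat.descFactorial_of_lt hk]
    simp

lemma natDegree_DW (t M q : ℕ) : (descPochhammer ℚ t * Wp M q).natDegree ≤ t + q := by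
  refine Polynomial.natDegree_mul_le.trans ?_
  rw [descPochhammer_natDegree]
  have := Wp_natDegree M q
  omega

lemma JC_of_mem {g n : ℕ} {p : MvPolynomial (Fin 3) ℚ} (hp : p ∈ relIdeal g n) : JC g n p := by
  unfold relIdeal at hp
  induction hp using Submodule.span_induction with
  | mem p hp =>
    rcases hp with rfl | ⟨r, s, t, ht, h1, h2, rfl⟩
    · intro a b
      refine ⟨0, by simp, ?_⟩
      intro i j k hi hj hk
      rw [X_pow_eq_monomial, coeff_monomial, if_neg]
      · simp
      · intro h
        have := DFunLike.congr_fun h 2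
        simp at this
        omega
    · obtain ⟨q, hq⟩ : ∃ q, r + 3 * s + 3 * t + 2 = max (s + t) g + q + 2 * g + n :=
        ⟨r + 3 * s + 3 * t + 2 - (max (s + t) g + 2 * g + n), by omega⟩
      rw [rho_eq g n r s t q ht (by omega) hq]
      apply JC_F
      intro _
      have := natDegree_DW t (max (s + t) g) q
      omega
  | zero => exact JC_zero g n
  | add p q _ _ hp hq => exact JC_add hp hq
  | smul c p _ hp => exact JC_mul c p hp

lemma F_DW_mem (g n a b T : ℕ) (hT : T + 3 * g + n + 1 = a + 2 * b + min b g + 3)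
    (d t : ℕ) (htd : t + d = T) (hm : t ≤ min a (min b g)) :
    F g a b (descPochhammer ℚ t * Wp (max b g) d) ∈ relIdeal g n := by
  obtain ⟨r, rfl⟩ : ∃ r, a = r + t := ⟨a - t, by omega⟩
  obtain ⟨s, rfl⟩ : ∃ s, b = s + t := ⟨b - t, by omega⟩
  rw [← rho_eq g n r s t d (by omega) (by omega) (by omega)]
  apply Ideal.subset_span
  right
  exact ⟨r, s, t, by omega, by omega, by omega, rfl⟩

lemma F_mem_aux (g n a b T : ℕ) (hT : T + 3 * g + n + 1 = a + 2 * b + min b g + 3) :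
    ∀ d t : ℕ, t + d = T → ∀ Q : Polynomial ℚ, Q.natDegree ≤ d →
      F g a b (descPochhammer ℚ t * Q) ∈ relIdeal g n := by
  intro d
  induction d with
  | zero =>
    intro t ht Q hQ
    by_cases hm : t ≤ min a (min b g)
    · have h := F_DW_mem g n a b T hT 0 t ht hm
      obtain ⟨c, rfl⟩ : ∃ c, Q = Polynomial.C c :=
        ⟨_, Polynomial.eq_C_of_natDegree_le_zero hQ⟩
      rw [mul_comm, F_C]
      apply Ideal.mul_mem_left
      simpa [Wp] using h
    · unfold F
      rw [Finset.sum_eq_zero]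
      · exact Ideal.zero_mem _
      · intro k hk
        rw [Finset.mem_range] at hk
        rw [Polynomial.eval_mul, descPochhammer_eval_eq_descFactorial,
          Nat.descFactorial_of_lt (by omega)]
        simp
  | succ d ih =>
    intro t ht Q hQ
    by_cases hm : t ≤ min a (min b g)
    · have h := F_DW_mem g n a b T hT (d + 1) t ht hm
      have hW := Wp_eval (max b g) (d + 1) t (by omega)
      set W := Wp (max b g) (d + 1) with hWdef
      have hW0 : W.eval (t : ℚ) ≠ 0 := by
        intro h0
        rw [h0, zero_mul] at hW
        exact (Nat.cast_ne_zero.mpr (Nat.factorial_ne_zero _)) hW.symm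
      set c := Q.eval (t : ℚ) / W.eval (t : ℚ) with hc
      have hroot : (Q - Polynomial.C c * W).IsRoot (t : ℚ) := by
        simp [Polynomial.IsRoot, hc, hW0]
      obtain ⟨Q', hQ'⟩ := Polynomial.dvd_iff_isRoot.mpr hroot
      have hdeg : (Q - Polynomial.C c * W).natDegree ≤ d + 1 := by
        refine (Polynomial.natDegree_sub_le _ _).trans ?_
        refine max_le hQ ((Polynomial.natDegree_C_mul_le _ _).trans (Wp_natDegree _ _))
      have hdQ' : Q'.natDegree ≤ d := by
        by_cases h0 : Q' = 0
        · simp [h0]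
        rw [hQ', Polynomial.natDegree_mul (Polynomial.X_sub_C_ne_zero _) h0,
          Polynomial.natDegree_X_sub_C] at hdeg
        omega
      have h2 := ih (t + 1) (by omega) Q' hdQ'
      have key : descPochhammer ℚ t * Q
          = Polynomial.C c * (descPochhammer ℚ t * W) + descPochhammer ℚ (t + 1) * Q' := by
        have : Q = Polynomial.C c * W + (Polynomial.X - Polynomial.C (t : ℚ)) * Q' := by
          rw [← hQ']; ring
        rw [descPochhammer_succ_right]
        conv_lhs => rw [this]
        simp only [map_natCast]
        ring
      rw [key, F_add, F_C]
      exact Ideal.add_mem _ (Ideal.mul_mem_left _ _ h) h2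
    · unfold F
      rw [Finset.sum_eq_zero]
      · exact Ideal.zero_mem _
      · intro k hk
        rw [Finset.mem_range] at hk
        rw [Polynomial.eval_mul, descPochhammer_eval_eq_descFactorial,
          Nat.descFactorial_of_lt (by omega)]
        simp

lemma F_mem {g n a b : ℕ} {Q : Polynomial ℚ}
    (hQ : Q ≠ 0 → Q.natDegree + 3 * g + n < a + 2 * b + min b g + 3) :
    F g a b Q ∈ relIdeal g n := by
  by_cases h0 : Q = 0
  · subst h0
    have : F g a b 0 = 0 := by simp [F]
    rw [this]; exact Ideal.zero_mem _
  have := hQ h0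
  have h := F_mem_aux g n a b (a + 2 * b + min b g + 2 - (3 * g + n)) (by omega)
    (a + 2 * b + min b g + 2 - (3 * g + n)) 0 (by omega) Q (by omega)
  simpa using h

lemma mem_of_JC {g n : ℕ} {p : MvPolynomial (Fin 3) ℚ} (hp : JC g n p) : p ∈ relIdeal g n := by
  choose P hP hP' using hp
  set S : Finset (ℕ × ℕ) := p.support.image (fun m => (m 0 + m 2, m 1 + m 2)) with hS
  set y := ∑ ab ∈ S, F g ab.1 ab.2 (P ab.1 ab.2) with hy
  have hymem : y ∈ relIdeal g n := Ideal.sum_mem _ fun ab _ => F_mem (hP ab.1 ab.2)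
  have hz : p - y ∈ relIdeal g n := by
    rw [← support_sum_monomial_coeff (p - y)]
    refine Ideal.sum_mem _ fun m hm => ?_
    by_cases hk : m 2 ≤ g
    · exfalso
      rw [mem_support_iff] at hm
      apply hm
      have hc : coeff m y = coeff m p := by
        rw [hy, coeff_sum]
        have hF : ∀ ab ∈ S, coeff m (F g ab.1 ab.2 (P ab.1 ab.2))
            = if (m 0 + m 2, m 1 + m 2) = ab then coeff m p else 0 := by
          rintro ⟨a, b⟩ _
          have h1 := coeff_F g a b (P a b) (m 0) (m 1) (m 2) hk
          rw [ex_eta] at h1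
          simp only [Prod.mk.injEq]
          rw [h1]
          by_cases h : a = m 0 + m 2 ∧ b = m 1 + m 2
          · rw [if_pos h, if_pos ⟨h.1.symm, h.2.symm⟩]
            have h2 := hP' a b (m 0) (m 1) (m 2) h.1.symm h.2.symm hk
            rw [ex_eta] at h2
            exact h2.symm
          · rw [if_neg h, if_neg (by omega)]
        rw [Finset.sum_congr rfl hF, Finset.sum_ite_eq]
        split_ifs with h
        · rfl
        · symm
          by_contra hne
          exact h (Finset.mem_image.mpr ⟨m, mem_support_iff.mpr hne, rfl⟩)
      rw [coeff_sub, hc, sub_self]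
    · have hdec : m = ex (m 0) (m 1) (m 2 - (g + 1)) + Finsupp.single 2 (g + 1) := by
        ext s; fin_cases s <;> simp [ex]
        omega
      have : monomial m (coeff m (p - y)) =
          monomial (ex (m 0) (m 1) (m 2 - (g + 1))) (coeff m (p - y)) * X 2 ^ (g + 1) := by
        rw [X_pow_eq_monomial, monomial_mul, mul_one, ← hdec]
      rw [this]
      exact Ideal.mul_mem_left _ _ (Ideal.subset_span (Or.inl rfl))
  have := Ideal.add_mem _ hz hymem
  simpa using this

lemma coeff_X0_pow (p : MvPolynomial (Fin 3) ℚ) (i j k l : ℕ) :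
    coeff (ex (i + l) j k) (p * X 0 ^ l) = coeff (ex i j k) p := by
  induction l with
  | zero => simp
  | succ l ih => rw [pow_succ, ← mul_assoc, ← add_assoc, coeff_X0, ih]

lemma coeff_X0_pow' (p : MvPolynomial (Fin 3) ℚ) (j k l : ℕ) :
    ∀ i, i < l → coeff (ex i j k) (p * X 0 ^ l) = 0 := by
  induction l with
  | zero => intro i hi; omega
  | succ l ih =>
    intro i hi
    rw [pow_succ, ← mul_assoc]
    rcases i with _ | i
    · rw [coeff_X0']
    · rw [coeff_X0, ih i (by omega)]

/-- The product of the linear factors `a+1+j - X`. -/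
noncomputable def Lp (a l : ℕ) : Polynomial ℚ :=
  ∏ j ∈ Finset.range l, (Polynomial.C ((a : ℚ) + 1 + j) - Polynomial.X)

lemma Lp_succ (a l : ℕ) :
    Lp a (l + 1) = Lp a l * (Polynomial.C ((a : ℚ) + 1 + l) - Polynomial.X) := by
  unfold Lp; rw [Finset.prod_range_succ]

lemma Lp_eval_ne (a l : ℕ) : (Lp a l).eval ((a : ℚ) + 1 + l) ≠ 0 := by
  unfold Lp
  rw [Polynomial.eval_prod, Finset.prod_ne_zero_iff]
  intro j hj
  rw [Finset.mem_range] at hj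
  simp only [Polynomial.eval_sub, Polynomial.eval_C, Polynomial.eval_X]
  have : (j : ℚ) < l := by exact_mod_cast hj
  intro h
  linarith

lemma Lp_dvd (P : Polynomial ℚ) (a l : ℕ) (h : ∀ j, j < l → P.eval ((a : ℚ) + 1 + j) = 0) :
    ∃ Q, P = Lp a l * Q ∧ (P ≠ 0 → P.natDegree = Q.natDegree + l) := by
  induction l with
  | zero => exact ⟨P, by simp [Lp], by simp⟩
  | succ l ih =>
    obtain ⟨Q, hQ, hd⟩ := ih fun j hj => h j (by omega)
    have h1 := h l (by omega)
    rw [hQ, Polynomial.eval_mul] at h1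
    have h2 : Q.IsRoot ((a : ℚ) + 1 + l) := (mul_eq_zero.mp h1).resolve_left (Lp_eval_ne a l)
    obtain ⟨R, hR⟩ := Polynomial.dvd_iff_isRoot.mpr h2
    refine ⟨-R, ?_, ?_⟩
    · rw [Lp_succ, hQ, hR]; ring
    · intro h0
      have hR0 : R ≠ 0 := by
        rintro rfl
        apply h0; rw [hQ, hR]; simp
      rw [hd h0, hR, Polynomial.natDegree_mul (Polynomial.X_sub_C_ne_zero _) hR0,
        Polynomial.natDegree_X_sub_C, Polynomial.natDegree_neg]
      omega

lemma Lp_fact (i k l : ℕ) :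
    ((i + l).factorial : ℚ) = (i.factorial : ℚ) * (Lp (i + k) l).eval (k : ℚ) := by
  induction l with
  | zero => simp [Lp]
  | succ l ih =>
    rw [← add_assoc, Nat.factorial_succ, Lp_succ, Polynomial.eval_mul, ← mul_assoc, ← ih]
    simp
    ring

lemma JC_descend {g n w : ℕ} {x : MvPolynomial (Fin 3) ℚ}
    (hx : MvPolynomial.IsWeightedHomogeneous ![2, 2, 4] x w)
    (hw : w + 3 < 3 * g + n)
    (h : JC g n (x * X 0 ^ (3 * g + n - 3 - w))) : JC g n x := by
  intro a b
  by_cases hab : 2 * a + 2 * b = w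
  swap
  · refine ⟨0, by simp, ?_⟩
    intro i j k hi hj hk
    by_contra hne
    have h1 := hx (d := ex i j k) (by simpa using hne)
    apply hab
    rw [← h1]
    simp [Finsupp.weight_apply, Finsupp.sum_fintype, Fin.sum_univ_three]
    omega
  obtain ⟨l, hl⟩ : ∃ l, l = 3 * g + n - 3 - w := ⟨_, rfl⟩
  rw [← hl] at h
  obtain ⟨P, hP, hP'⟩ := h (a + l) b
  have hvan : ∀ k, a < k → k ≤ a + l → k ≤ min b g → P.eval (k : ℚ) = 0 := by
    intro k h1 h2 h3
    have := hP' (a + l - k) (b - k) k (by omega) (by omega) (by omega)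
    rw [coeff_X0_pow' _ _ _ _ _ (by omega)] at this
    exact (mul_eq_zero.mp this.symm).resolve_left (wt_ne _ _ _ _)
  by_cases hP0 : P = 0
  · refine ⟨0, by simp, ?_⟩
    intro i j k hi hj hk
    have := hP' (i + l) j k (by omega) hj hk
    rw [coeff_X0_pow, hP0] at this
    simpa using this
  have hdeg := hP hP0
  have hlt : a + l < min b g := by
    by_contra hge
    obtain ⟨Q, hQ, hd⟩ := Lp_dvd P a (min b g - a) (by
      intro j hj
      have := hvan (a + 1 + j) (by omega) (by omega) (by omega)
      simpa using this)
    have := hd hP0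
    omega
  obtain ⟨Q, hQ, hd⟩ := Lp_dvd P a l (by
    intro j hj
    have := hvan (a + 1 + j) (by omega) (by omega) (by omega)
    simpa using this)
  refine ⟨Q, ?_, ?_⟩
  · intro _
    have := hd hP0
    omega
  · intro i j k hi hj hk
    have h1 := hP' (i + l) j k (by omega) hj hk
    rw [coeff_X0_pow] at h1
    rw [h1, hQ, Polynomial.eval_mul]
    unfold wt
    rw [Lp_fact i k l]
    have hne : (Lp (i + k) l).eval (k : ℚ) ≠ 0 := by
      intro h0
      have := Lp_fact i k l
      rw [h0, mul_zero] at this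
      exact (Nat.cast_ne_zero.mpr (Nat.factorial_ne_zero _)) this
    subst hi
    field_simp

/-- Assign weights `2, 2, 4` to `α, β, γ`.  If `x ∈ ℚ[α,β,γ]` is
weighted-homogeneous of weight `w` with `0 ≤ w < 3g−3+n` and `x·α^{3g−3+n−w} ∈ I^g_n`,
then `x ∈ I^g_n`. -/
theorem statement19 (g n : ℕ) (x : MvPolynomial (Fin 3) ℚ) (w : ℕ)
    (hx : MvPolynomial.IsWeightedHomogeneous ![2, 2, 4] x w)
    (hw : (w : ℤ) < 3 * (g : ℤ) - 3 + n)
    (hmem : x * X 0 ^ (3 * g + n - 3 - w) ∈ relIdeal g n) :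
    x ∈ relIdeal g n := by
  exact mem_of_JC (JC_descend hx (by omega) (JC_of_mem hmem))

end Statement19
end
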